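/- Let λ ∈ ℂ*, a, a₀, a₁, a₂, b, b₁, b₂ ∈ ℂ with 0 ≤ Re a, Re a₀, Re a₁, Re a₂ < 1 and b₁ b₂ ≠ 0; let B ∈ O_𝔟 be a nontrivial simple 𝔟-module and W ∈ O_𝔚 a nontrivial simple 𝔚-module such that L(W, λ, a, b) is simple. Then the Virasoro modules L(W, λ, a, b), N(B, a₀), L₀(a₁, b₁) and L₁(a₂, b₂) are pairwise non-isomorphic. -/

import Mathlib

/-- A representation of the Witt algebra `𝔚 = span{d_i : i ≥ -1}`, encoded by the family of
operators `d i` (only the indices `i ≥ -1` are relevant) satisfying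
`[d_m, d_n] = (n - m) d_{m+n}`. -/
structure WittRep (W : Type*) [AddCommGroup W] [Module ℂ W] where
  d : ℤ → W →ₗ[ℂ] W
  comm : ∀ m n : ℤ, -1 ≤ m → -1 ≤ n →
    d m ∘ₗ d n - d n ∘ₗ d m = (((n - m : ℤ) : ℂ)) • d (m + n)

namespace WittRep

variable {W : Type*} [AddCommGroup W] [Module ℂ W]

/-- Condition A : the module lies in the category `O_𝔚`. -/
def InO (ρ : WittRep W) : Prop :=
  ∀ v : W, ∃ n : ℕ, ∀ i : ℤ, (n : ℤ) ≤ i → ρ.d i v = 0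

/-- The module is trivial: the Lie algebra acts by zero. -/
def IsTrivial (ρ : WittRep W) : Prop := ∀ i : ℤ, -1 ≤ i → ρ.d i = 0

/-- A `𝔚`-submodule. -/
def Invariant (ρ : WittRep W) (U : Submodule ℂ W) : Prop :=
  ∀ i : ℤ, -1 ≤ i → ∀ u ∈ U, ρ.d i u ∈ U

/-- Simplicity of a `𝔚`-module. -/
def IsSimple (ρ : WittRep W) : Prop :=
  (∃ v : W, v ≠ 0) ∧ ∀ U : Submodule ℂ W, ρ.Invariant U → U = ⊥ ∨ U = ⊤

/-- A `𝔟`-submodule (`𝔟 = span{d_i : i ≥ 0}`). -/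
def BInvariant (ρ : WittRep W) (U : Submodule ℂ W) : Prop :=
  ∀ i : ℤ, 0 ≤ i → ∀ u ∈ U, ρ.d i u ∈ U

/-- The socle `Soc_𝔟(W)`: the sum of the minimal nonzero `𝔟`-submodules. -/
def Soc (ρ : WittRep W) : Submodule ℂ W :=
  sSup {U | ρ.BInvariant U ∧ U ≠ ⊥ ∧
    ∀ U' : Submodule ℂ W, ρ.BInvariant U' → U' ≠ ⊥ → U' ≤ U → U' = U}

/-- `w₀` is a highest weight vector of weight `b'`. -/
def IsHW (ρ : WittRep W) (w₀ : W) (b' : ℂ) : Prop :=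
  w₀ ≠ 0 ∧ ρ.d 0 w₀ = b' • w₀ ∧ ∀ i : ℤ, 1 ≤ i → ρ.d i w₀ = 0

/-- `w₀` generates the `𝔚`-module. -/
def Generates (ρ : WittRep W) (w₀ : W) : Prop :=
  ∀ U : Submodule ℂ W, ρ.Invariant U → w₀ ∈ U → U = ⊤

/-- The operator `e^{kt} d/dt = Σ_{i ≥ 0} (k^i/i!) d_{i-1}` (a finite sum on each vector of a
module in `O_𝔚`). -/
noncomputable def E (ρ : WittRep W) (k : ℤ) (w : W) : W :=
  ∑ᶠ i : ℕ, (((k : ℂ) ^ i) / (Nat.factorial i : ℂ)) • ρ.d ((i : ℤ) - 1) w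

/-- The action of `d_k` on `L(W, λ, a, b) = W ⊗ ℂ[t, t⁻¹]`, realized on `ℤ →₀ W`
(`w ⊗ t^j ↦ Finsupp.single j w`):
`d_k · (w ⊗ t^j) = ((λ^k e^{kt} − 1) d/dt + a + kb + j) w ⊗ t^{k+j}`. -/
noncomputable def Lact (ρ : WittRep W) (lam a b : ℂ) (k : ℤ) (f : ℤ →₀ W) : ℤ →₀ W :=
  f.sum fun j w => Finsupp.single (k + j)
    (lam ^ k • ρ.E k w - ρ.d (-1) w + (a + (k : ℂ) * b + (j : ℂ)) • w)

/-- The PBW map `ℕ →₀ ℂ → W`, `(k, c) ↦ c • d_{-1}^k w₀`. -/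
noncomputable def pbwMap (ρ : WittRep W) (w₀ : W) : (ℕ →₀ ℂ) →ₗ[ℂ] W :=
  Finsupp.lsum ℂ fun k : ℕ => ((ρ.d (-1)) ^ k) ∘ₗ LinearMap.toSpanSingleton ℂ W w₀

/-- `W` is the Verma `𝔚`-module with highest weight vector `w₀` of highest weight `b'`. -/
def IsVerma (ρ : WittRep W) (w₀ : W) (b' : ℂ) : Prop :=
  ρ.d 0 w₀ = b' • w₀ ∧ (∀ i : ℤ, 1 ≤ i → ρ.d i w₀ = 0) ∧
    Function.Bijective (ρ.pbwMap w₀)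

/-- `W^{(n)} = Σ_{i=0}^n d_{-1}^i (Soc_𝔟 W)`. -/
noncomputable def Wn (ρ : WittRep W) (n : ℕ) : Submodule ℂ W :=
  ⨆ i : Fin (n + 1), Submodule.map ((ρ.d (-1)) ^ (i : ℕ)) ρ.Soc

/-- `L₀(a, b') = span{d₁^i · (w₀ ⊗ t^{2j})} ⊆ L(W, -1, a, b' + 1)`. -/
noncomputable def Lzero (ρ : WittRep W) (a b' : ℂ) (w₀ : W) : Submodule ℂ (ℤ →₀ W) :=
  Submodule.span ℂ
    {g | ∃ (i : ℕ) (j : ℤ), g = (ρ.Lact (-1) a (b' + 1) 1)^[i] (Finsupp.single (2 * j) w₀)}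

/-- `L₁(a, b') = span{d₁^i · (w₀ ⊗ t^{2j+1})} ⊆ L(W, -1, a, b' + 1)`. -/
noncomputable def Lone (ρ : WittRep W) (a b' : ℂ) (w₀ : W) : Submodule ℂ (ℤ →₀ W) :=
  Submodule.span ℂ
    {g | ∃ (i : ℕ) (j : ℤ), g = (ρ.Lact (-1) a (b' + 1) 1)^[i] (Finsupp.single (2 * j + 1) w₀)}

end WittRep

/-- A representation of the Lie algebra `𝔟 = span{d_i : i ≥ 0}`. -/
structure BRep (B : Type*) [AddCommGroup B] [Module ℂ B] where
  d : ℕ → B →ₗ[ℂ] B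
  comm : ∀ m n : ℕ, d m ∘ₗ d n - d n ∘ₗ d m = (((n : ℂ) - (m : ℂ))) • d (m + n)

namespace BRep

variable {B : Type*} [AddCommGroup B] [Module ℂ B]

/-- Condition A : the module lies in the category `O_𝔟`. -/
def InO (ρ : BRep B) : Prop := ∀ v : B, ∃ n : ℕ, ∀ i : ℕ, n ≤ i → ρ.d i v = 0

def IsTrivial (ρ : BRep B) : Prop := ∀ i : ℕ, ρ.d i = 0

def IsSimple (ρ : BRep B) : Prop :=
  (∃ v : B, v ≠ 0) ∧
    ∀ U : Submodule ℂ B, (∀ i : ℕ, ∀ u ∈ U, ρ.d i u ∈ U) → U = ⊥ ∨ U = ⊤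

/-- The set of `r ∈ ℤ≥0` such that `d_{r+i} v = 0` for all `i ≥ 1`;
`ord_𝔟(v)` is its least element. -/
def ordSet (ρ : BRep B) (v : B) : Set ℕ := {r : ℕ | ∀ i : ℕ, r + 1 ≤ i → ρ.d i v = 0}

/-- The action of `d_m` on the Virasoro module `N(B_(c), a) = B ⊗ ℂ[t, t⁻¹]`, realized on
`ℤ →₀ B`:  `d_m · (w ⊗ t^j) = (Σ_{i≥1} (m^i/i!) d_{i-1} + mc + a + j) w ⊗ t^{m+j}`
(`c` is the twist of the `d₀`-action; `c = 0` gives `N(B, a)`). -/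
noncomputable def Nact (ρ : BRep B) (a c : ℂ) (m : ℤ) (f : ℤ →₀ B) : ℤ →₀ B :=
  f.sum fun j w => Finsupp.single (m + j)
    ((∑ᶠ i : ℕ, (((m : ℂ) ^ (i + 1)) / (Nat.factorial (i + 1) : ℂ)) • ρ.d i w) +
      ((m : ℂ) * c + a + (j : ℂ)) • w)

end BRep

/-- For a family `U : ℤ → Submodule ℂ W`, the subspace `⊕_j U j ⊗ t^j` of `W ⊗ ℂ[t,t⁻¹]`. -/
def gradedSub {W : Type*} [AddCommGroup W] [Module ℂ W] (U : ℤ → Submodule ℂ W) :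
    Submodule ℂ (ℤ →₀ W) where
  carrier := {f | ∀ j, f j ∈ U j}
  add_mem' := fun hf hg j => by
    simpa only [Finsupp.add_apply] using (U j).add_mem (hf j) (hg j)
  zero_mem' := fun j => by simp
  smul_mem' := fun c f hf j => by
    simpa only [Finsupp.smul_apply] using (U j).smul_mem c (hf j)

/-- A submodule invariant under a (ℤ-indexed) family of operators. -/
def ActInvariant {V : Type*} [AddCommGroup V] [Module ℂ V] (act : ℤ → V → V)
    (M : Submodule ℂ V) : Prop :=
  ∀ k : ℤ, ∀ u ∈ M, act k u ∈ M

/-- Simplicity of the module given by a family of operators (the central element acts by zero). -/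
def ActSimple {V : Type*} [AddCommGroup V] [Module ℂ V] (act : ℤ → V → V) : Prop :=
  (∃ v : V, v ≠ 0) ∧ ∀ M : Submodule ℂ V, ActInvariant act M → M = ⊥ ∨ M = ⊤

/-- A representation of the Virasoro algebra. -/
structure VirasoroRep (V : Type*) [AddCommGroup V] [Module ℂ V] where
  d : ℤ → V →ₗ[ℂ] V
  z : V →ₗ[ℂ] V
  comm : ∀ m n : ℤ, d m ∘ₗ d n - d n ∘ₗ d m =
    (((n - m : ℤ) : ℂ)) • d (m + n) +
      (if m + n = 0 then (((n : ℂ) ^ 3 - (n : ℂ)) / 12) else 0) • z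
  comm_z : ∀ m : ℤ, d m ∘ₗ z = z ∘ₗ d m


open Polynomial

/-- The space of functions `ℤ → V` that are polynomial in the integer variable. -/
def polyFun (V : Type*) [AddCommGroup V] [Module ℂ V] : Submodule ℂ (ℤ → V) :=
  Submodule.span ℂ {f | ∃ (i : ℕ) (v : V), f = fun m : ℤ => (m : ℂ) ^ i • v}

/-- The shift operator `f ↦ f (· + 1)` on functions `ℤ → V`. -/
def shiftFun (V : Type*) [AddCommGroup V] [Module ℂ V] : Module.End ℂ (ℤ → V) :=
  LinearMap.funLeft ℂ V (· + 1)

/-- The functions of the form `μ ^ m • p m` with `p` polynomial, described as generalized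
eigenvectors of the shift operator. -/
abbrev expFun (V : Type*) [AddCommGroup V] [Module ℂ V] (μ : ℂ) : Submodule ℂ (ℤ → V) :=
  (shiftFun V).maxGenEigenspace μ

section polyFun

variable {V V' : Type*} [AddCommGroup V] [Module ℂ V] [AddCommGroup V'] [Module ℂ V']

theorem monomial_mem_polyFun (i : ℕ) (v : V) : (fun m : ℤ => (m : ℂ) ^ i • v) ∈ polyFun V :=
  Submodule.subset_span ⟨i, v, rfl⟩

theorem const_mem_polyFun (v : V) : (fun _ : ℤ => v) ∈ polyFun V := by
  simpa using monomial_mem_polyFun 0 v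

theorem polyFun_map_le (F : (ℤ → V) →ₗ[ℂ] (ℤ → V'))
    (hF : ∀ (i : ℕ) (v : V), F (fun m : ℤ => (m : ℂ) ^ i • v) ∈ polyFun V')
    {f : ℤ → V} (hf : f ∈ polyFun V) : F f ∈ polyFun V' := by
  have h : polyFun V ≤ (polyFun V').comap F := by
    refine Submodule.span_le.2 ?_
    rintro _ ⟨i, v, rfl⟩
    exact hF i v
  exact h hf

theorem polyFun_comp (T : V →ₗ[ℂ] V') {f : ℤ → V} (hf : f ∈ polyFun V) :
    (fun m => T (f m)) ∈ polyFun V' :=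
  polyFun_map_le (T.compLeft ℤ) (fun i v => by
    have : (T.compLeft ℤ) (fun m : ℤ => (m : ℂ) ^ i • v) = fun m : ℤ => (m : ℂ) ^ i • T v := by
      ext m; simp
    rw [this]; exact monomial_mem_polyFun i _) hf

theorem polyFun_neg_arg {f : ℤ → V} (hf : f ∈ polyFun V) :
    (fun m => f (-m)) ∈ polyFun V :=
  polyFun_map_le (LinearMap.funLeft ℂ V (fun m : ℤ => -m)) (fun i v => by
    have : (LinearMap.funLeft ℂ V (fun m : ℤ => -m)) (fun m : ℤ => (m : ℂ) ^ i • v)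
        = (-1 : ℂ) ^ i • fun m : ℤ => (m : ℂ) ^ i • v := by
      ext m
      simp [LinearMap.funLeft_apply, smul_smul, ← mul_pow]
    rw [this]; exact Submodule.smul_mem _ _ (monomial_mem_polyFun i _)) hf

theorem polyFun_mul_arg {f : ℤ → V} (hf : f ∈ polyFun V) :
    (fun m : ℤ => (m : ℂ) • f m) ∈ polyFun V :=
  polyFun_map_le (LinearMap.pi fun m : ℤ => (m : ℂ) • LinearMap.proj m) (fun i v => by
    have : (LinearMap.pi fun m : ℤ => (m : ℂ) • LinearMap.proj (R := ℂ) (φ := fun _ => V) m)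
        (fun m : ℤ => (m : ℂ) ^ i • v) = fun m : ℤ => (m : ℂ) ^ (i + 1) • v := by
      ext m; simp [smul_smul, pow_succ']
    rw [this]; exact monomial_mem_polyFun _ _) hf

theorem shiftFun_apply (f : ℤ → V) (m : ℤ) : shiftFun V f m = f (m + 1) := rfl

theorem mul_arg_mem_expFun {μ : ℂ} {f : ℤ → V} (hf : f ∈ expFun V μ) :
    (fun m : ℤ => (m : ℂ) • f m) ∈ expFun V μ := by
  rw [Module.End.mem_maxGenEigenspace] at hf ⊢
  obtain ⟨N, hN⟩ := hf
  refine ⟨N + 1, ?_⟩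
  induction N generalizing f with
  | zero =>
    have : f = 0 := by simpa using hN
    subst this
    have : (fun m : ℤ => (m : ℂ) • (0 : ℤ → V) m) = 0 := by ext m; simp
    rw [this, map_zero]
  | succ N ih =>
    have hsplit : (shiftFun V - μ • (1 : Module.End ℂ (ℤ → V))) (fun m : ℤ => (m : ℂ) • f m) =
        (fun m : ℤ => (m : ℂ) • ((shiftFun V - μ • (1 : Module.End ℂ (ℤ → V))) f) m) +
          shiftFun V f := by
      ext m
      simp only [LinearMap.sub_apply, LinearMap.smul_apply, Module.End.one_apply, Pi.sub_apply,
        Pi.smul_apply, shiftFun_apply, Pi.add_apply, Int.cast_add, Int.cast_one]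
      module
    rw [pow_succ, Module.End.mul_apply, hsplit, map_add, ih, zero_add]
    · have hc : Commute ((shiftFun V - μ • (1 : Module.End ℂ (ℤ → V))) ^ (N + 1)) (shiftFun V) :=
        ((Commute.refl _).sub_left ((Commute.one_left _).smul_left μ)).pow_left _
      rw [← Module.End.mul_apply, hc.eq, Module.End.mul_apply, hN, map_zero]
    · rw [← Module.End.mul_apply, ← pow_succ, hN]

theorem polyFun_le_expFun_one : polyFun V ≤ expFun V 1 := by
  refine Submodule.span_le.2 ?_
  rintro _ ⟨i, v, rfl⟩
  simp only [SetLike.mem_coe]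
  induction i with
  | zero =>
    rw [Module.End.mem_maxGenEigenspace]
    refine ⟨1, ?_⟩
    ext m
    simp [shiftFun_apply]
  | succ i ih =>
    have := mul_arg_mem_expFun ih
    simpa only [smul_smul, ← pow_succ'] using this

theorem zpow_smul_mem_expFun {c : ℂ} (hc : c ≠ 0) {f : ℤ → V} (hf : f ∈ polyFun V) :
    (fun m : ℤ => c ^ m • f m) ∈ expFun V c := by
  have hf' := polyFun_le_expFun_one hf
  rw [Module.End.mem_maxGenEigenspace] at hf' ⊢
  obtain ⟨N, hN⟩ := hf'
  refine ⟨N, ?_⟩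
  clear hf
  induction N generalizing f with
  | zero =>
    have : f = 0 := by simpa using hN
    subst this
    ext m; simp
  | succ N ih =>
    rw [pow_succ, Module.End.mul_apply] at hN ⊢
    have hsplit : (shiftFun V - c • (1 : Module.End ℂ (ℤ → V))) (fun m : ℤ => c ^ m • f m) =
        c • (fun m : ℤ => c ^ m •
          ((shiftFun V - (1 : ℂ) • (1 : Module.End ℂ (ℤ → V))) f) m) := by
      ext m
      simp only [LinearMap.sub_apply, LinearMap.smul_apply, Module.End.one_apply, Pi.sub_apply,
        Pi.smul_apply, shiftFun_apply, zpow_add₀ hc, zpow_one]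
      module
    rw [hsplit, map_smul, ih hN, smul_zero]

theorem comp_mem_expFun (T : V →ₗ[ℂ] V') {μ : ℂ} {f : ℤ → V} (hf : f ∈ expFun V μ) :
    (fun m => T (f m)) ∈ expFun V' μ := by
  rw [Module.End.mem_maxGenEigenspace] at hf ⊢
  obtain ⟨N, hN⟩ := hf
  refine ⟨N, ?_⟩
  induction N generalizing f with
  | zero =>
    have : f = 0 := by simpa using hN
    subst this
    ext m; simp
  | succ N ih =>
    rw [pow_succ, Module.End.mul_apply] at hN ⊢
    have hsplit : (shiftFun V' - μ • (1 : Module.End ℂ (ℤ → V'))) (fun m : ℤ => T (f m)) =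
        fun m : ℤ => T (((shiftFun V - μ • (1 : Module.End ℂ (ℤ → V))) f) m) := by
      ext m
      simp [shiftFun_apply]
    rw [hsplit, ih hN]

theorem disjoint_expFun {s t : Set ℂ} (h : Disjoint s t) :
    Disjoint (⨆ μ ∈ s, expFun V μ) (⨆ μ ∈ t, expFun V μ) :=
  ((shiftFun V).independent_maxGenEigenspace).disjoint_biSup_biSup h

end polyFun

/-- The operator `Σ_i (k^(i+r)/(i+r)!) e_i` attached to a family of operators `e`. -/
noncomputable def expSeries {V : Type*} [AddCommGroup V] [Module ℂ V] (e : ℕ → V →ₗ[ℂ] V)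
    (r : ℕ) (k : ℤ) (w : V) : V :=
  ∑ᶠ i : ℕ, (((k : ℂ) ^ (i + r)) / (Nat.factorial (i + r) : ℂ)) • e i w

section expSeries

variable {V : Type*} [AddCommGroup V] [Module ℂ V] {e : ℕ → V →ₗ[ℂ] V}

/-- The truncated sum defining `expSeries e r k w`, valid for all `k` at once. -/
theorem exists_expSeries_eq_sum (he : ∀ w, ∃ n : ℕ, ∀ i, n ≤ i → e i w = 0) (r : ℕ) (w : V) :
    ∃ N : ℕ, ∀ n, N ≤ n → ∀ k : ℤ, expSeries e r k w = ∑ i ∈ Finset.range n,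
      (((k : ℂ) ^ (i + r)) / (Nat.factorial (i + r) : ℂ)) • e i w := by
  obtain ⟨N, hN⟩ := he w
  refine ⟨N, fun n hn k => finsum_eq_sum_of_support_subset _ fun i hi => ?_⟩
  by_contra hi'
  refine hi ?_
  have : n ≤ i := by simpa using hi'
  simp only [hN i (by omega), smul_zero]

/-- `expSeries e r k` as a linear map, for a locally finite family `e`. -/
noncomputable def expSeriesLin (he : ∀ w, ∃ n : ℕ, ∀ i, n ≤ i → e i w = 0) (r : ℕ) (k : ℤ) :
    V →ₗ[ℂ] V where
  toFun := expSeries e r k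
  map_add' v w := by
    obtain ⟨N₁, h₁⟩ := exists_expSeries_eq_sum he r v
    obtain ⟨N₂, h₂⟩ := exists_expSeries_eq_sum he r w
    obtain ⟨N₃, h₃⟩ := exists_expSeries_eq_sum he r (v + w)
    rw [h₁ (N₁ + N₂ + N₃) (by omega), h₂ (N₁ + N₂ + N₃) (by omega),
      h₃ (N₁ + N₂ + N₃) (by omega), ← Finset.sum_add_distrib]
    simp only [map_add, smul_add]
  map_smul' c v := by
    obtain ⟨N₁, h₁⟩ := exists_expSeries_eq_sum he r v
    obtain ⟨N₂, h₂⟩ := exists_expSeries_eq_sum he r (c • v)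
    rw [h₁ (N₁ + N₂) (by omega), h₂ (N₁ + N₂) (by omega), RingHom.id_apply, Finset.smul_sum]
    simp only [map_smul, smul_comm c]

theorem expSeriesLin_apply (he : ∀ w, ∃ n : ℕ, ∀ i, n ≤ i → e i w = 0) (r : ℕ) (k : ℤ) (w : V) :
    expSeriesLin he r k w = expSeries e r k w := rfl

theorem expSeries_mem_polyFun (he : ∀ w, ∃ n : ℕ, ∀ i, n ≤ i → e i w = 0) (r : ℕ)
    {f : ℤ → V} (hf : f ∈ polyFun V) : (fun m => expSeries e r m (f m)) ∈ polyFun V :=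
  polyFun_map_le (LinearMap.pi fun m : ℤ => expSeriesLin he r m ∘ₗ LinearMap.proj m)
    (fun i v => by
      obtain ⟨N, h⟩ := exists_expSeries_eq_sum he r v
      have : (LinearMap.pi fun m : ℤ =>
          expSeriesLin he r m ∘ₗ LinearMap.proj (R := ℂ) (φ := fun _ => V) m)
          (fun m : ℤ => (m : ℂ) ^ i • v) =
          ∑ l ∈ Finset.range N, ((1 : ℂ) / (Nat.factorial (l + r) : ℂ)) •
            fun m : ℤ => (m : ℂ) ^ (i + (l + r)) • e l v := by
        ext m
        simp only [LinearMap.pi_apply, LinearMap.comp_apply, LinearMap.proj_apply, map_smul,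
          expSeriesLin_apply, h N le_rfl, Finset.smul_sum, Finset.sum_apply, Pi.smul_apply,
          smul_smul]
        refine Finset.sum_congr rfl fun l _ => ?_
        congr 1
        ring
      rw [this]
      exact Submodule.sum_mem _ fun l _ => Submodule.smul_mem _ _ (monomial_mem_polyFun _ _)) hf

end expSeries

namespace WittRep

variable {W : Type*} [AddCommGroup W] [Module ℂ W] {ρ : WittRep W}

theorem InO.locallyFinite (hO : ρ.InO) (w : W) :
    ∃ n : ℕ, ∀ i, n ≤ i → ρ.d (((i : ℕ) : ℤ) - 1) w = 0 := by
  obtain ⟨N, hN⟩ := hO w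
  exact ⟨N + 1, fun i hi => hN _ (by omega)⟩

/-- The truncated sum defining `E k w`, valid for all `k` at once. -/
theorem exists_E_eq_sum (hO : ρ.InO) (w : W) : ∃ N : ℕ, ∀ n, N ≤ n → ∀ k : ℤ,
    ρ.E k w = ∑ i ∈ Finset.range n,
      (((k : ℂ) ^ i) / (Nat.factorial i : ℂ)) • ρ.d ((i : ℤ) - 1) w :=
  exists_expSeries_eq_sum hO.locallyFinite 0 w

/-- `E k` as a linear map on a module in `O_𝔚`. -/
noncomputable def Elin (hO : ρ.InO) (k : ℤ) : W →ₗ[ℂ] W :=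
  expSeriesLin hO.locallyFinite 0 k

@[simp]
theorem Elin_apply (hO : ρ.InO) (k : ℤ) (w : W) : Elin hO k w = ρ.E k w := rfl

theorem E_zero_arg (hO : ρ.InO) (w : W) : ρ.E 0 w = ρ.d (-1) w := by
  obtain ⟨N, h⟩ := exists_E_eq_sum hO w
  rw [h (N + 1) (by omega), Finset.sum_range_succ']
  simp

theorem E_mem_polyFun (hO : ρ.InO) {f : ℤ → W} (hf : f ∈ polyFun W) :
    (fun m => ρ.E m (f m)) ∈ polyFun W :=
  expSeries_mem_polyFun hO.locallyFinite 0 hf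

theorem E_neg_mem_polyFun (hO : ρ.InO) {f : ℤ → W} (hf : f ∈ polyFun W) :
    (fun m => ρ.E (-m) (f m)) ∈ polyFun W := by
  simpa using polyFun_neg_arg (E_mem_polyFun hO (polyFun_neg_arg hf))

/-- The action of `d_k` on `L(W, λ, a, b)` as a linear map. -/
noncomputable def Llin (hO : ρ.InO) (lam a b : ℂ) (k : ℤ) : (ℤ →₀ W) →ₗ[ℂ] (ℤ →₀ W) :=
  Finsupp.lsum ℂ fun j : ℤ => Finsupp.lsingle (k + j) ∘ₗ
    (lam ^ k • Elin hO k - ρ.d (-1) + (a + (k : ℂ) * b + (j : ℂ)) • LinearMap.id)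

@[simp]
theorem Llin_apply (hO : ρ.InO) (lam a b : ℂ) (k : ℤ) (f : ℤ →₀ W) :
    Llin hO lam a b k f = ρ.Lact lam a b k f := rfl

theorem Lact_single (hO : ρ.InO) (lam a b : ℂ) (k j : ℤ) (w : W) :
    ρ.Lact lam a b k (Finsupp.single j w) = Finsupp.single (k + j)
      (lam ^ k • ρ.E k w - ρ.d (-1) w + (a + (k : ℂ) * b + (j : ℂ)) • w) := by
  rw [← Llin_apply hO, Llin, Finsupp.lsum_single]
  rfl

theorem Lact_zero_single (hO : ρ.InO) (lam a b : ℂ) (j : ℤ) (w : W) :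
    ρ.Lact lam a b 0 (Finsupp.single j w) = (a + (j : ℂ)) • Finsupp.single j w := by
  rw [Lact_single hO, E_zero_arg hO]
  simp

/-- The operator `w ⊗ t^j ↦ (d_{-1} - (a + j) / 2) w ⊗ t^j`. -/
noncomputable def midOp (ρ : WittRep W) (a : ℂ) : Module.End ℂ (ℤ →₀ W) :=
  Finsupp.lsum ℂ fun j : ℤ => Finsupp.lsingle j ∘ₗ
    (ρ.d (-1) - ((a + (j : ℂ)) / 2) • LinearMap.id)

theorem midOp_single (a : ℂ) (j : ℤ) (w : W) :
    ρ.midOp a (Finsupp.single j w) =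
      Finsupp.single j (ρ.d (-1) w - ((a + (j : ℂ)) / 2) • w) := by
  simp [midOp]

theorem midOp_Lact_zero (hO : ρ.InO) (lam a b : ℂ) (v : ℤ →₀ W) :
    ρ.midOp a (ρ.Lact lam a b 0 v) = ρ.Lact lam a b 0 (ρ.midOp a v) := by
  have : ρ.midOp a ∘ₗ Llin hO lam a b 0 = Llin hO lam a b 0 ∘ₗ ρ.midOp a := by
    ext j w : 2
    simp only [LinearMap.comp_apply, Finsupp.lsingle_apply, Llin_apply, Lact_zero_single hO,
      map_smul, midOp_single]
  exact LinearMap.congr_fun this v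

/-- As a function of `m`, the product `d_{-m} d_m` on `L(W, λ, a, b)` splits into a polynomial
part and parts proportional to `λ ^ m` and `λ ^ (-m)`; the polynomial part at `m = 0` is
expressed through `midOp`. -/
theorem exists_Lact_neg_Lact (hO : ρ.InO) {lam : ℂ} (hlam : lam ≠ 0) (a b : ℂ) (v : ℤ →₀ W) :
    ∃ P ∈ polyFun (ℤ →₀ W), ∃ Q ∈ polyFun (ℤ →₀ W), ∃ R ∈ polyFun (ℤ →₀ W),
      (∀ m : ℤ, ρ.Lact lam a b (-m) (ρ.Lact lam a b m v) =
        P m + lam ^ m • Q m + lam⁻¹ ^ m • R m) ∧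
      P 0 = (2 : ℂ) • ρ.midOp a (ρ.midOp a v) +
        (1 / 2 : ℂ) • ρ.Lact lam a b 0 (ρ.Lact lam a b 0 v) := by
  induction v using Finsupp.induction_linear with
  | zero =>
    refine ⟨0, zero_mem _, 0, zero_mem _, 0, zero_mem _, fun m => ?_, ?_⟩
    · simp only [← Llin_apply hO, map_zero]; simp
    · simp only [← Llin_apply hO, map_zero]; simp
  | add v v' ih ih' =>
    obtain ⟨P, hP, Q, hQ, R, hR, h, h0⟩ := ih
    obtain ⟨P', hP', Q', hQ', R', hR', h', h0'⟩ := ih'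
    refine ⟨P + P', add_mem hP hP', Q + Q', add_mem hQ hQ', R + R', add_mem hR hR',
      fun m => ?_, ?_⟩
    · simp only [← Llin_apply hO, map_add] at h h' ⊢
      rw [h, h']
      simp only [Pi.add_apply]
      module
    · simp only [← Llin_apply hO, map_add] at h0 h0' ⊢
      rw [Pi.add_apply, h0, h0']
      module
  | single j w =>
    have hR' : (fun m : ℤ => -ρ.d (-1) w + (a + (m : ℂ) * b + (j : ℂ)) • w) ∈ polyFun W := by
      have := add_mem (const_mem_polyFun (-ρ.d (-1) w + (a + (j : ℂ)) • w))
        (polyFun_mul_arg (const_mem_polyFun (b • w)))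
      convert this using 1
      ext m
      simp only [Pi.add_apply]
      module
    have hS {f : ℤ → W} (hf : f ∈ polyFun W) : (fun m : ℤ => -ρ.d (-1) (f m) +
        (a + ((-m : ℤ) : ℂ) * b + ((m + j : ℤ) : ℂ)) • f m) ∈ polyFun W := by
      have := add_mem (add_mem (Submodule.smul_mem _ (-1 : ℂ) (polyFun_comp (ρ.d (-1)) hf))
        (Submodule.smul_mem _ (a + (j : ℂ)) hf))
        (Submodule.smul_mem _ (1 - b) (polyFun_mul_arg hf))
      convert this using 1
      ext m
      simp only [Pi.add_apply, Pi.smul_apply]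
      push_cast
      module
    have hE : (fun m : ℤ => ρ.E m w) ∈ polyFun W := E_mem_polyFun hO (const_mem_polyFun w)
    refine ⟨_, polyFun_comp (Finsupp.lsingle j) (add_mem (E_neg_mem_polyFun hO hE) (hS hR')),
      _, polyFun_comp (Finsupp.lsingle j) (hS hE),
      _, polyFun_comp (Finsupp.lsingle j) (E_neg_mem_polyFun hO hR'), fun m => ?_, ?_⟩
    · have hl : lam ^ m ≠ 0 := zpow_ne_zero _ hlam
      simp only [Lact_single hO, neg_add_cancel_left, Finsupp.lsingle_apply, Finsupp.smul_single]
      rw [← Finsupp.single_add, ← Finsupp.single_add]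
      simp only [← Elin_apply hO, Pi.add_apply, map_add, map_sub, map_smul, map_neg, zpow_neg,
        inv_zpow]
      congr 1
      have : (lam ^ m)⁻¹ * lam ^ m = 1 := inv_mul_cancel₀ hl
      push_cast
      linear_combination (norm := module) this • Elin hO (-m) (Elin hO m w)
    · have hD : ρ.Lact lam a b 0 (ρ.Lact lam a b 0 (Finsupp.single j w)) =
          Finsupp.single j (((a + (j : ℂ)) * (a + (j : ℂ))) • w) := by
        rw [Lact_zero_single hO, ← Llin_apply hO, map_smul, Llin_apply, Lact_zero_single hO,
          smul_smul, Finsupp.smul_single]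
      rw [hD, midOp_single, midOp_single, Finsupp.smul_single, Finsupp.smul_single,
        ← Finsupp.single_add, Finsupp.lsingle_apply]
      congr 1
      simp only [Pi.add_apply, neg_zero, E_zero_arg hO, map_add, map_sub, map_smul, map_neg]
      push_cast
      module

end WittRep

namespace BRep

variable {B : Type*} [AddCommGroup B] [Module ℂ B] {ρ : BRep B}

/-- The action of `d_m` on `N(B, a)` as a linear map. -/
noncomputable def Nlin (hO : ρ.InO) (a c : ℂ) (m : ℤ) : (ℤ →₀ B) →ₗ[ℂ] (ℤ →₀ B) :=
  Finsupp.lsum ℂ fun j : ℤ => Finsupp.lsingle (m + j) ∘ₗ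
    (expSeriesLin hO 1 m + ((m : ℂ) * c + a + (j : ℂ)) • LinearMap.id)

theorem Nlin_apply (hO : ρ.InO) (a c : ℂ) (m : ℤ) (f : ℤ →₀ B) :
    Nlin hO a c m f = ρ.Nact a c m f := rfl

theorem Nact_single (hO : ρ.InO) (a c : ℂ) (m j : ℤ) (w : B) :
    ρ.Nact a c m (Finsupp.single j w) = Finsupp.single (m + j)
      (expSeries ρ.d 1 m w + ((m : ℂ) * c + a + (j : ℂ)) • w) := by
  rw [← Nlin_apply hO, Nlin, Finsupp.lsum_single]
  rfl

theorem Nact_neg_Nact_mem_polyFun (hO : ρ.InO) (a c : ℂ) (v : ℤ →₀ B) :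
    (fun m : ℤ => ρ.Nact a c (-m) (ρ.Nact a c m v)) ∈ polyFun (ℤ →₀ B) := by
  induction v using Finsupp.induction_linear with
  | zero =>
    simp only [← Nlin_apply hO, map_zero]
    exact zero_mem _
  | add v v' ih ih' =>
    simp only [← Nlin_apply hO, map_add] at ih ih' ⊢
    exact add_mem ih ih'
  | single j w =>
    have hstep {f : ℤ → B} (hf : f ∈ polyFun B) (x y : ℂ) : (fun m : ℤ =>
        expSeries ρ.d 1 m (f m) + (x + (m : ℂ) * y) • f m) ∈ polyFun B := by
      have := add_mem (expSeries_mem_polyFun hO 1 hf)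
        (add_mem (Submodule.smul_mem _ x hf) (Submodule.smul_mem _ y (polyFun_mul_arg hf)))
      convert this using 1
      ext m
      simp only [Pi.add_apply, Pi.smul_apply]
      module
    have hfst := hstep (const_mem_polyFun w) (a + j) c
    have hsnd := polyFun_neg_arg (hstep (polyFun_neg_arg hfst) (a + j) (c - 1))
    convert polyFun_comp (Finsupp.lsingle (R := ℂ) j) hsnd using 1
    ext m : 1
    rw [Nact_single hO, Nact_single hO, neg_add_cancel_left, Finsupp.lsingle_apply]
    congr 1
    simp only [neg_neg]
    have h₁ : (m : ℂ) * c + a + j = a + j + m * c := by ring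
    have h₂ : ((-m : ℤ) : ℂ) * c + a + ((m + j : ℤ) : ℂ) =
        a + j + ((-m : ℤ) : ℂ) * (c - 1) := by push_cast; ring
    rw [h₁, h₂]

end BRep

namespace WittRep

variable {W : Type*} [AddCommGroup W] [Module ℂ W] {ρ : WittRep W}
variable {W' : Type*} [AddCommGroup W'] [Module ℂ W'] {ρ' : WittRep W'}
variable {V : Type*} [AddCommGroup V] [Module ℂ V]

theorem isTrivial_of_d_neg_one_eq_zero (h : ρ.d (-1) = 0) : ρ.IsTrivial := by
  intro i hi
  have hc := ρ.comm (-1) (i + 1) le_rfl (by omega)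
  rw [h, LinearMap.zero_comp, LinearMap.comp_zero, sub_zero,
    show (-1 : ℤ) + (i + 1) = i by ring] at hc
  refine (smul_eq_zero.1 hc.symm).resolve_left ?_
  exact_mod_cast (by omega : i + 1 - -1 ≠ 0)

/-- If `m ↦ d_{-m} d_m v` has no component of exponent `λ` or `λ⁻¹`, then
`4 (d_{-1} - d_0 / 2)² v = d_0² v`. -/
theorem midOp_sq_of_mem_expFun (hO : ρ.InO) {lam : ℂ} (hlam : lam ≠ 0) (a b : ℂ) (v : ℤ →₀ W)
    {ψ : (ℤ →₀ W) →ₗ[ℂ] V} (hψ : Function.Injective ψ) {s : Set ℂ} (h1 : (1 : ℂ) ∈ s)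
    (hs : lam ∉ s) (hs' : lam⁻¹ ∉ s)
    (h : (fun m : ℤ => ψ (ρ.Lact lam a b (-m) (ρ.Lact lam a b m v))) ∈ ⨆ μ ∈ s, expFun V μ) :
    (4 : ℂ) • ρ.midOp a (ρ.midOp a v) = ρ.Lact lam a b 0 (ρ.Lact lam a b 0 v) := by
  obtain ⟨P, hP, Q, hQ, R, hR, hPQR, hP0⟩ := exists_Lact_neg_Lact hO hlam a b v
  have hQR : (fun m : ℤ => ψ (lam ^ m • Q m)) + (fun m : ℤ => ψ (lam⁻¹ ^ m • R m)) = 0 := by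
    have hdisj : Disjoint s {lam, lam⁻¹} := by
      rw [Set.disjoint_right]
      rintro x (rfl | rfl)
      exacts [hs, hs']
    refine Submodule.disjoint_def.1 (disjoint_expFun (V := V) hdisj) _ ?_ ?_
    · have hP1 : (fun m : ℤ => ψ (P m)) ∈ ⨆ μ ∈ s, expFun V μ :=
        (le_biSup (fun μ => expFun V μ) h1) (comp_mem_expFun ψ (polyFun_le_expFun_one hP))
      convert sub_mem h hP1 using 1
      ext m
      simp only [Pi.add_apply, Pi.sub_apply, hPQR, map_add]
      abel
    · exact add_mem
        ((le_biSup (fun μ => expFun V μ) (show lam ∈ ({lam, lam⁻¹} : Set ℂ) by simp))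
          (comp_mem_expFun ψ (zpow_smul_mem_expFun hlam hQ)))
        ((le_biSup (fun μ => expFun V μ) (show lam⁻¹ ∈ ({lam, lam⁻¹} : Set ℂ) by simp))
          (comp_mem_expFun ψ (zpow_smul_mem_expFun (inv_ne_zero hlam) hR)))
  have h0 : Q 0 + R 0 = 0 := by
    apply hψ
    simpa using congrFun hQR 0
  have hA := hPQR 0
  simp only [zpow_zero, one_smul, add_assoc, h0, add_zero, neg_zero] at hA
  rw [hP0] at hA
  linear_combination (norm := module) (-2 : ℂ) • hA

theorem d_neg_one_sq_of_midOp_sq (hO : ρ.InO) {lam a b : ℂ} {j : ℤ} {w : W}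
    (h : (4 : ℂ) • ρ.midOp a (ρ.midOp a (Finsupp.single j w)) =
      ρ.Lact lam a b 0 (ρ.Lact lam a b 0 (Finsupp.single j w))) :
    ρ.d (-1) (ρ.d (-1) w) = (a + j) • ρ.d (-1) w := by
  rw [Lact_zero_single hO, ← Llin_apply hO, map_smul, Llin_apply, Lact_zero_single hO,
    midOp_single, midOp_single, Finsupp.smul_single, Finsupp.smul_single,
    Finsupp.smul_single] at h
  have h' := Finsupp.single_injective j h
  simp only [map_sub, map_smul] at h'
  linear_combination (norm := module) (1 / 4 : ℂ) • h'

theorem isTrivial_of_mem_expFun (hO : ρ.InO) {lam : ℂ} (hlam : lam ≠ 0) (a b : ℂ)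
    {ψ : (ℤ →₀ W) →ₗ[ℂ] V} (hψ : Function.Injective ψ) {s : Set ℂ} (h1 : (1 : ℂ) ∈ s)
    (hs : lam ∉ s) (hs' : lam⁻¹ ∉ s)
    (h : ∀ v, (fun m : ℤ => ψ (ρ.Lact lam a b (-m) (ρ.Lact lam a b m v))) ∈
      ⨆ μ ∈ s, expFun V μ) : ρ.IsTrivial := by
  refine isTrivial_of_d_neg_one_eq_zero (LinearMap.ext fun w => ?_)
  have key (j : ℤ) : ρ.d (-1) (ρ.d (-1) w) = (a + j) • ρ.d (-1) w :=
    d_neg_one_sq_of_midOp_sq hO (midOp_sq_of_mem_expFun hO hlam a b _ hψ h1 hs hs' (h _))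
  have h₀ := key 0
  have h₁ := key 1
  rw [LinearMap.zero_apply]
  push_cast at h₀ h₁
  linear_combination (norm := module) h₀ - h₁

theorem Lact_neg_Lact_mem_expFun (hO : ρ.InO) (a b : ℂ) (v : ℤ →₀ W) :
    (fun m : ℤ => ρ.Lact (-1) a b (-m) (ρ.Lact (-1) a b m v)) ∈
      ⨆ μ ∈ ({1, -1} : Set ℂ), expFun (ℤ →₀ W) μ := by
  obtain ⟨P, hP, Q, hQ, R, hR, hPQR, -⟩ :=
    exists_Lact_neg_Lact hO (neg_ne_zero.2 one_ne_zero) a b v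
  have hneg {f : ℤ → ℤ →₀ W} (hf : f ∈ polyFun (ℤ →₀ W)) : (fun m : ℤ => (-1 : ℂ) ^ m • f m) ∈
      ⨆ μ ∈ ({1, -1} : Set ℂ), expFun (ℤ →₀ W) μ :=
    (le_biSup (fun μ => expFun (ℤ →₀ W) μ) (show (-1 : ℂ) ∈ ({1, -1} : Set ℂ) by simp))
      (zpow_smul_mem_expFun (neg_ne_zero.2 one_ne_zero) hf)
  have hpos : P ∈ ⨆ μ ∈ ({1, -1} : Set ℂ), expFun (ℤ →₀ W) μ :=
    (le_biSup (fun μ => expFun (ℤ →₀ W) μ) (show (1 : ℂ) ∈ ({1, -1} : Set ℂ) by simp))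
      (polyFun_le_expFun_one hP)
  convert add_mem (add_mem hpos (hneg hQ)) (hneg hR) using 1
  ext1 m
  simp only [hPQR, Pi.add_apply, inv_neg, inv_one]

/-- A linear map intertwining all products `d_{-m} d_m` at `v` intertwines `midOp²` at `v`. -/
theorem map_midOp_sq (hO : ρ.InO) (hO' : ρ'.InO) {a b a' b' : ℂ}
    (Ψ : (ℤ →₀ W) →ₗ[ℂ] (ℤ →₀ W')) (v : ℤ →₀ W)
    (h : ∀ m : ℤ, Ψ (ρ.Lact (-1) a b (-m) (ρ.Lact (-1) a b m v)) =
      ρ'.Lact (-1) a' b' (-m) (ρ'.Lact (-1) a' b' m (Ψ v))) :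
    Ψ (ρ.midOp a (ρ.midOp a v)) = ρ'.midOp a' (ρ'.midOp a' (Ψ v)) := by
  have h1 : (-1 : ℂ) ≠ 0 := neg_ne_zero.2 one_ne_zero
  obtain ⟨P, hP, Q, hQ, R, hR, hPQR, hP0⟩ := exists_Lact_neg_Lact hO h1 a b v
  obtain ⟨P', hP', Q', hQ', R', hR', hPQR', hP0'⟩ := exists_Lact_neg_Lact hO' h1 a' b' (Ψ v)
  have hdisj : Disjoint ({1} : Set ℂ) {-1} := by
    rw [Set.disjoint_singleton]
    norm_num
  have hPP' : (fun m : ℤ => Ψ (P m)) - P' = 0 := by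
    refine Submodule.disjoint_def.1 (disjoint_expFun (V := ℤ →₀ W') hdisj) _ ?_ ?_
    · simp only [Set.mem_singleton_iff, iSup_iSup_eq_left]
      exact polyFun_le_expFun_one (sub_mem (polyFun_comp Ψ hP) hP')
    · simp only [Set.mem_singleton_iff, iSup_iSup_eq_left]
      convert zpow_smul_mem_expFun h1
        (sub_mem (add_mem hQ' hR') (polyFun_comp Ψ (add_mem hQ hR))) using 1
      ext1 m
      have := h m
      simp only [hPQR, hPQR', inv_neg, inv_one, map_add, map_smul] at this
      simp only [Pi.sub_apply, Pi.add_apply, map_add]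
      linear_combination (norm := module) this
  have hz : Ψ (P 0) = P' 0 := sub_eq_zero.1 (congrFun hPP' 0)
  have h0 := h 0
  rw [neg_zero] at h0
  rw [hP0, hP0', map_add, map_smul, map_smul, h0] at hz
  linear_combination (norm := module) (1 / 2 : ℂ) • hz

/-- For `λ = 1` the module `L(W, λ, a, b)` is not simple. -/
theorem isTrivial_of_actSimple_one (hO : ρ.InO) {a b : ℂ} (hL : ActSimple (ρ.Lact 1 a b)) :
    ρ.IsTrivial := by
  obtain ⟨⟨f, hf⟩, hL⟩ := hL
  obtain ⟨j, hj⟩ : ∃ j, f j ≠ 0 := by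
    by_contra! h
    exact hf (Finsupp.ext h)
  obtain ⟨n, hn⟩ := hO (f j)
  let U : Submodule ℂ W := ⨅ i : {i : ℤ // (n : ℤ) ≤ i}, LinearMap.ker (ρ.d i)
  have mem_U (w : W) : w ∈ U ↔ ∀ i : ℤ, (n : ℤ) ≤ i → ρ.d i w = 0 := by
    simp [U, Submodule.mem_iInf]
  have hUd (w : W) (hw : w ∈ U) (m : ℤ) (hm : 0 ≤ m) : ρ.d m w ∈ U := by
    rw [mem_U] at hw ⊢
    intro i hi
    have hc := LinearMap.congr_fun (ρ.comm i m (by omega) (by omega)) w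
    simpa [hw i hi, hw (i + m) (by omega)] using hc
  have hinv : ActInvariant (ρ.Lact 1 a b) (gradedSub fun _ => U) := by
    intro k g hg i
    rw [Lact, Finsupp.sum, Finsupp.finsetSum_apply]
    refine Submodule.sum_mem _ fun l _ => ?_
    rw [Finsupp.single_apply]
    split_ifs
    · have hgl : g l ∈ U := hg l
      refine add_mem ?_ (Submodule.smul_mem _ _ hgl)
      obtain ⟨N, hN⟩ := exists_E_eq_sum hO (g l)
      rw [one_zpow, one_smul, hN (N + 1) (by omega), Finset.sum_range_succ']
      simp only [pow_zero, Nat.factorial_zero, Nat.cast_one, div_one, one_smul, Nat.cast_zero,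
        zero_sub, add_sub_cancel_right]
      exact Submodule.sum_mem _ fun i _ => Submodule.smul_mem _ _ (hUd _ hgl _ (by simp))
    · exact zero_mem _
  have hmem (w : W) (hw : Finsupp.single 0 w ∈ gradedSub fun _ : ℤ => U) : w ∈ U := by
    simpa using hw 0
  have hU : ∀ w, w ∈ U := by
    rcases hL _ hinv with h | h
    · exfalso
      have : Finsupp.single j (f j) ∈ gradedSub fun _ : ℤ => U := by
        intro i
        rw [Finsupp.single_apply]
        split_ifs
        · exact (mem_U _).2 hn
        · exact zero_mem _
      rw [h, Submodule.mem_bot, Finsupp.single_eq_zero] at this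
      exact hj this
    · exact fun w => hmem w (h ▸ Submodule.mem_top)
  have hdown (r : ℕ) : ∀ i : ℤ, -1 ≤ i → (n : ℤ) - r ≤ i → ρ.d i = 0 := by
    induction r with
    | zero => exact fun i _ hi => LinearMap.ext fun w => (mem_U w).1 (hU w) i (by simpa using hi)
    | succ r ih =>
      intro i hi hir
      have hc := ρ.comm (-1) (i + 1) le_rfl (by omega)
      rw [ih (i + 1) (by omega) (by push_cast at hir; omega), LinearMap.zero_comp,
        LinearMap.comp_zero, sub_zero, show (-1 : ℤ) + (i + 1) = i by ring] at hc
      refine (smul_eq_zero.1 hc.symm).resolve_left ?_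
      exact_mod_cast (by omega : i + 1 - -1 ≠ 0)
  exact fun i hi => hdown (n + 1) i hi (by push_cast; omega)

end WittRep

/-- Polynomials that are even or odd according to the parity of `e`. -/
noncomputable def paritySub (e : ℤ) : Submodule ℂ ℂ[X] where
  carrier := {p | p.comp (-X) = (-1 : ℂ) ^ e • p}
  add_mem' hp hq := by
    simp only [Set.mem_ofPred_eq] at hp hq ⊢
    rw [add_comp, hp, hq, smul_add]
  zero_mem' := by simp
  smul_mem' c p hp := by
    simp only [Set.mem_ofPred_eq] at hp ⊢
    rw [smul_comp, hp, smul_comm]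

theorem mem_paritySub {e : ℤ} {p : ℂ[X]} :
    p ∈ paritySub e ↔ p.comp (-X) = (-1 : ℂ) ^ e • p := Iff.rfl

theorem comp_neg_X_coeff (p : ℂ[X]) (n : ℕ) :
    (p.comp (-X)).coeff n = (-1) ^ n * p.coeff n := by
  rw [← neg_one_mul, ← C_1, ← C_neg, comp_C_mul_X_coeff, mul_comm]

theorem neg_one_zpow_mul_self (k : ℤ) : (-1 : ℂ) ^ k * (-1 : ℂ) ^ k = 1 := by
  rw [← mul_zpow]; simp

theorem one_mem_paritySub {e : ℤ} (he : Even e) : (1 : ℂ[X]) ∈ paritySub e := by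
  simp [mem_paritySub, he.neg_one_zpow]

theorem X_mul_mem_paritySub {e : ℤ} {p : ℂ[X]} (hp : p ∈ paritySub e) :
    X * p ∈ paritySub (e + 1) := by
  rw [mem_paritySub] at hp ⊢
  rw [mul_comp, X_comp, hp, zpow_add₀ (by norm_num), zpow_one, mul_neg_one, neg_smul,
    mul_smul_comm, neg_mul, smul_neg]

theorem even_sub_natDegree_of_mem_paritySub {e : ℤ} {p : ℂ[X]} (hp : p ∈ paritySub e)
    (h0 : p ≠ 0) : Even (e - p.natDegree) := by
  rw [mem_paritySub] at hp
  have h := congrArg (fun q => coeff q p.natDegree) hp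
  simp only [comp_neg_X_coeff, coeff_smul, smul_eq_mul, coeff_natDegree] at h
  have h' := mul_right_cancel₀ (leadingCoeff_ne_zero.2 h0) h
  by_contra hodd
  rw [Int.not_even_iff_odd] at hodd
  have h1 := hodd.neg_one_zpow (α := ℂ)
  rw [zpow_sub₀ (by norm_num), ← h', zpow_natCast, div_self (pow_ne_zero _ (by norm_num))] at h1
  norm_num at h1

theorem exists_comp_X_sq_of_even {e : ℤ} (he : Even e) {p : ℂ[X]} (hp : p ∈ paritySub e) :
    ∃ r : ℂ[X], p = r.comp (X ^ 2) := by
  rw [mem_paritySub, he.neg_one_zpow, one_smul] at hp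
  refine ⟨contract 2 p, ?_⟩
  rw [← expand_eq_comp_X_pow]
  ext n
  rw [coeff_expand two_pos]
  split_ifs with h
  · rw [coeff_contract two_ne_zero, Nat.div_mul_cancel h]
  · have hn := congrArg (fun q => coeff q n) hp
    have : Odd n := by rwa [← Nat.not_even_iff_odd, even_iff_two_dvd]
    simp only [comp_neg_X_coeff, this.neg_one_pow] at hn
    linear_combination (-1 / 2 : ℂ) * hn

theorem exists_X_mul_comp_X_sq_of_odd {e : ℤ} (he : Odd e) {p : ℂ[X]} (hp : p ∈ paritySub e) :
    ∃ r : ℂ[X], p = X * r.comp (X ^ 2) := by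
  have h0 : p.coeff 0 = 0 := by
    rw [mem_paritySub, he.neg_one_zpow] at hp
    have hn := congrArg (fun q => coeff q 0) hp
    simp only [comp_neg_X_coeff, pow_zero, one_mul, coeff_smul, smul_eq_mul] at hn
    linear_combination (1 / 2 : ℂ) * hn
  obtain ⟨q, rfl⟩ := X_dvd_iff.2 h0
  have hq : q ∈ paritySub (e + 1) := by
    rw [mem_paritySub] at hp ⊢
    rw [mul_comp, X_comp] at hp
    refine mul_left_cancel₀ (X_ne_zero (R := ℂ)) ?_
    rw [zpow_add₀ (by norm_num), zpow_one, mul_neg_one, neg_smul, mul_neg, mul_smul_comm, ← hp]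
    ring
  obtain ⟨r, rfl⟩ := exists_comp_X_sq_of_even he.add_one hq
  exact ⟨r, rfl⟩

/-- The action of `d_k` on `L(W, -1, a, b' + 1)` for a highest weight module `W`, in the
coordinate `d_{-1} - s / 2`, where `s` is the weight of the source. -/
noncomputable def hwAct (b' s : ℂ) (k : ℤ) (p : ℂ[X]) : ℂ[X] :=
  C ((-1) ^ k) * (X + C ((s + k) / 2 + k * b')) * p.comp (X - C ((k : ℂ) / 2)) -
    (X - C ((s + k) / 2 + k * b')) * p.comp (X + C ((k : ℂ) / 2))

theorem hwAct_mem_paritySub (b' s : ℂ) (k : ℤ) {e : ℤ} {p : ℂ[X]} (hp : p ∈ paritySub e) :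
    hwAct b' s k p ∈ paritySub (k + e) := by
  rw [mem_paritySub] at hp ⊢
  have h₁ : p.comp (-X - C ((k : ℂ) / 2)) = (-1 : ℂ) ^ e • p.comp (X + C ((k : ℂ) / 2)) := by
    rw [← smul_comp, ← hp, comp_assoc]
    congr 1
    simp only [neg_comp, X_comp]; ring
  have h₂ : p.comp (-X + C ((k : ℂ) / 2)) = (-1 : ℂ) ^ e • p.comp (X - C ((k : ℂ) / 2)) := by
    rw [← smul_comp, ← hp, comp_assoc]
    congr 1
    simp only [neg_comp, X_comp]; ring
  simp only [hwAct, sub_comp, mul_comp, add_comp, X_comp, C_comp, comp_assoc, h₁, h₂]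
  have hk : (C ((-1 : ℂ) ^ k)) * C ((-1 : ℂ) ^ k) = (1 : ℂ[X]) := by
    rw [← C_mul, neg_one_zpow_mul_self, C_1]
  simp only [smul_eq_C_mul, zpow_add₀ (show (-1 : ℂ) ≠ 0 by norm_num), C_mul]
  linear_combination (-C ((-1 : ℂ) ^ e) * (X + C ((s + k) / 2 + k * b')) *
    p.comp (X - C ((k : ℂ) / 2))) * hk

theorem hwAct_one_natDegree (b' s : ℂ) {p : ℂ[X]} {n : ℕ} (hn : p.natDegree ≤ n) :
    (hwAct b' s 1 p).natDegree ≤ n + 1 ∧ (hwAct b' s 1 p).coeff (n + 1) = -2 * p.coeff n := by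
  have hdeg (r : ℂ) : (p.comp (X + C r)).natDegree ≤ n := by
    rw [natDegree_comp, natDegree_X_add_C, mul_one]; exact hn
  have hcoeff (r : ℂ) : (p.comp (X + C r)).coeff n = p.coeff n := by
    rcases hn.lt_or_eq with h | rfl
    · rw [coeff_eq_zero_of_natDegree_lt h, coeff_eq_zero_of_natDegree_lt]
      rwa [natDegree_comp, natDegree_X_add_C, mul_one]
    · have := coeff_comp_degree_mul_degree (p := p) (q := X + C r)
        (by rw [natDegree_X_add_C]; exact one_ne_zero)
      rw [natDegree_X_add_C, mul_one] at this
      simpa using this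
  have hform : hwAct b' s 1 p =
      -((X + C ((s + (1 : ℤ)) / 2 + (1 : ℤ) * b')) * p.comp (X + C (-(((1 : ℤ) : ℂ) / 2)))) -
      (X + C (-((s + (1 : ℤ)) / 2 + (1 : ℤ) * b'))) * p.comp (X + C (((1 : ℤ) : ℂ) / 2)) := by
    simp only [hwAct, zpow_one, C_neg, C_1, ← sub_eq_add_neg]
    ring
  have hmul (c r : ℂ) : ((X + C c) * p.comp (X + C r)).natDegree ≤ n + 1 ∧
      ((X + C c) * p.comp (X + C r)).coeff (n + 1) = p.coeff n := by
    constructor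
    · refine natDegree_mul_le.trans ?_
      rw [natDegree_X_add_C, add_comm]
      exact Nat.add_le_add_right (hdeg r) 1
    · rw [add_comm n 1, coeff_mul_add_eq_of_natDegree_le (natDegree_X_add_C c).le (hdeg r),
        hcoeff r]
      simp
  rw [hform]
  refine ⟨(natDegree_sub_le _ _).trans (max_le ?_ (hmul _ _).1), ?_⟩
  · rw [natDegree_neg]; exact (hmul _ _).1
  · rw [coeff_sub, coeff_neg, (hmul _ _).2, (hmul _ _).2]; ring

theorem hwAct_neg_one_hwAct_one_one (b' s : ℂ) :
    hwAct b' (s + 1) (-1) (hwAct b' s 1 1) = C 4 * (X * X) + C (s - 2 * b') := by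
  refine Polynomial.funext fun x => ?_
  simp [hwAct]
  ring

theorem hwAct_neg_one_hwAct_one_X (b' s : ℂ) :
    hwAct b' (s + 1) (-1) (hwAct b' s 1 X) = C 4 * (X * (X * X)) + C (s - 6 * b') * X := by
  refine Polynomial.funext fun x => ?_
  simp [hwAct]
  ring

namespace WittRep

variable {W : Type*} [AddCommGroup W] [Module ℂ W] {ρ : WittRep W}

theorem d_d_neg_one (n : ℕ) (w : W) :
    ρ.d n (ρ.d (-1) w) = ρ.d (-1) (ρ.d n w) - ((n : ℂ) + 1) • ρ.d ((n : ℤ) - 1) w := by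
  have h := congrArg (fun T => T w) (ρ.comm n (-1) (by omega) le_rfl)
  simp only [LinearMap.sub_apply, LinearMap.comp_apply, LinearMap.smul_apply] at h
  rw [sub_eq_iff_eq_add] at h
  rw [h, ← sub_eq_add_neg (n : ℤ) 1]
  push_cast
  module

theorem E_d_neg_one (hO : ρ.InO) (k : ℤ) (w : W) :
    ρ.E k (ρ.d (-1) w) = ρ.d (-1) (ρ.E k w) - (k : ℂ) • ρ.E k w := by
  obtain ⟨N, hN⟩ := exists_E_eq_sum hO w
  obtain ⟨N', hN'⟩ := exists_E_eq_sum hO (ρ.d (-1) w)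
  have hstep (i : ℕ) : (((k : ℂ) ^ (i + 1)) / (Nat.factorial (i + 1) : ℂ)) •
      ρ.d (((i + 1 : ℕ) : ℤ) - 1) (ρ.d (-1) w) =
      ρ.d (-1) ((((k : ℂ) ^ (i + 1)) / (Nat.factorial (i + 1) : ℂ)) •
        ρ.d (((i + 1 : ℕ) : ℤ) - 1) w) -
      (k : ℂ) • ((((k : ℂ) ^ i) / (Nat.factorial i : ℂ)) • ρ.d ((i : ℤ) - 1) w) := by
    have hi : (((i + 1 : ℕ) : ℤ) - 1) = (i : ℤ) := by push_cast; ring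
    have hf : (Nat.factorial i : ℂ) ≠ 0 := by exact_mod_cast Nat.factorial_ne_zero i
    have hi' : (i : ℂ) + 1 ≠ 0 := by exact_mod_cast i.succ_ne_zero
    rw [hi, d_d_neg_one, smul_sub, map_smul, smul_smul, smul_smul, Nat.factorial_succ]
    congr 2
    push_cast
    field_simp
    ring
  rw [hN' (max N N' + 1) (by omega), hN (max N N' + 1) (by omega), Finset.sum_range_succ',
    Finset.sum_congr rfl fun i _ => hstep i, Finset.sum_sub_distrib, ← map_sum, ← Finset.smul_sum,
    ← hN (max N N') (by omega), ← hN (max N N' + 1) (by omega),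
    hN (max N N' + 1) (by omega), Finset.sum_range_succ', map_add]
  simp only [Nat.factorial_zero, pow_zero, Nat.cast_zero, zero_sub, map_smul]
  module

/-- The vectors `p(d_{-1} - s / 2) w₀` of a highest weight module. -/
noncomputable def polyVec (ρ : WittRep W) (w₀ : W) (s : ℂ) : ℂ[X] →ₗ[ℂ] W :=
  LinearMap.applyₗ w₀ ∘ₗ (aeval (ρ.d (-1) - algebraMap ℂ (Module.End ℂ W) (s / 2))).toLinearMap

theorem polyVec_apply (w₀ : W) (s : ℂ) (p : ℂ[X]) : ρ.polyVec w₀ s p =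
    aeval (ρ.d (-1) - algebraMap ℂ (Module.End ℂ W) (s / 2)) p w₀ := rfl

@[simp]
theorem polyVec_one (w₀ : W) (s : ℂ) : ρ.polyVec w₀ s 1 = w₀ := by
  simp [polyVec_apply]

theorem polyVec_X_mul (w₀ : W) (s : ℂ) (p : ℂ[X]) :
    ρ.polyVec w₀ s (X * p) = ρ.d (-1) (ρ.polyVec w₀ s p) - (s / 2) • ρ.polyVec w₀ s p := by
  simp [polyVec_apply, Module.algebraMap_end_apply]

theorem polyVec_C_mul (w₀ : W) (s c : ℂ) (p : ℂ[X]) :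
    ρ.polyVec w₀ s (C c * p) = c • ρ.polyVec w₀ s p := by
  rw [← smul_eq_C_mul, map_smul]

theorem polyVec_comp (w₀ : W) (s t : ℂ) (p : ℂ[X]) :
    ρ.polyVec w₀ s (p.comp (X + C ((s - t) / 2))) = ρ.polyVec w₀ t p := by
  rw [polyVec_apply, aeval_comp, polyVec_apply]
  congr 2
  rw [map_add, aeval_X, aeval_C, sub_add, ← map_sub]
  congr 3
  ring

section IsHW

variable {w₀ : W} {b' : ℂ}

theorem d_pow_d_neg_one_eq_zero (hw : ρ.IsHW w₀ b') {n k : ℕ} (h : k < n) :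
    ρ.d n ((ρ.d (-1) ^ k) w₀) = 0 := by
  induction k generalizing n with
  | zero => simpa using hw.2.2 n (by omega)
  | succ k ih =>
    obtain ⟨m, rfl⟩ : ∃ m, n = m + 1 := ⟨n - 1, by omega⟩
    have hm : (((m + 1 : ℕ) : ℤ) - 1) = (m : ℤ) := by push_cast; ring
    rw [pow_succ', Module.End.mul_apply, d_d_neg_one, ih (by omega), hm, ih (by omega)]
    simp

theorem d_pow_d_neg_one_self (hw : ρ.IsHW w₀ b') (n : ℕ) :
    ρ.d n ((ρ.d (-1) ^ n) w₀) = ((-1) ^ n * (Nat.factorial (n + 1) : ℂ) * b') • w₀ := by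
  induction n with
  | zero => simpa using hw.2.1
  | succ n ih =>
    have hm : (((n + 1 : ℕ) : ℤ) - 1) = (n : ℤ) := by push_cast; ring
    rw [pow_succ' (ρ.d (-1)), Module.End.mul_apply, d_d_neg_one,
      d_pow_d_neg_one_eq_zero hw n.lt_succ_self, hm, ih, Nat.factorial_succ (n + 1)]
    push_cast
    simp only [map_zero]
    module

theorem eq_zero_of_aeval_d_neg_one (hw : ρ.IsHW w₀ b') (hb : b' ≠ 0) {p : ℂ[X]}
    (hp : aeval (ρ.d (-1)) p w₀ = 0) : p = 0 := by
  by_contra h0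
  have h := congrArg (ρ.d p.natDegree) hp
  rw [aeval_eq_sum_range, LinearMap.sum_apply, map_sum, Finset.sum_range_succ,
    Finset.sum_eq_zero, zero_add, map_zero, LinearMap.smul_apply, map_smul,
    d_pow_d_neg_one_self hw, smul_smul] at h
  · have hf : (Nat.factorial (p.natDegree + 1) : ℂ) ≠ 0 := by
      exact_mod_cast Nat.factorial_ne_zero _
    rcases smul_eq_zero.1 h with h | h
    · simp [hf, hb, h0] at h
    · exact hw.1 h
  · intro i hi
    rw [LinearMap.smul_apply, map_smul, d_pow_d_neg_one_eq_zero hw (Finset.mem_range.1 hi),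
      smul_zero]

theorem polyVec_injective (hw : ρ.IsHW w₀ b') (hb : b' ≠ 0) (s : ℂ) :
    Function.Injective (ρ.polyVec w₀ s) := by
  refine (injective_iff_map_eq_zero _).2 fun p hp => ?_
  rw [← polyVec_comp w₀ 0 s, polyVec_apply, zero_div, map_zero, sub_zero] at hp
  have h := eq_zero_of_aeval_d_neg_one hw hb hp
  rw [comp_eq_zero_iff] at h
  rcases h with h | ⟨-, h⟩
  · exact h
  · have := congrArg natDegree h
    simp at this

theorem E_polyVec (hO : ρ.InO) (hw : ρ.IsHW w₀ b') (k : ℤ) (s : ℂ) (p : ℂ[X]) :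
    ρ.E k (ρ.polyVec w₀ s p) =
      ρ.polyVec w₀ s ((X + C (s / 2 + k * b')) * p.comp (X - C (k : ℂ))) := by
  induction p using Polynomial.induction_on with
  | C c =>
    obtain ⟨N, hN⟩ := exists_E_eq_sum hO w₀
    have hE : ρ.E k w₀ = ρ.d (-1) w₀ + ((k : ℂ) * b') • w₀ := by
      rw [hN (N + 2) (by omega), Finset.sum_range_succ', Finset.sum_range_succ',
        Finset.sum_eq_zero]
      · simp [hw.2.1, smul_smul, add_comm]
      · intro i _
        rw [hw.2.2 _ (by push_cast; omega), smul_zero]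
    rw [C_comp, mul_comm, polyVec_C_mul, ← mul_one (C c), polyVec_C_mul, polyVec_one,
      ← Elin_apply hO, map_smul, Elin_apply, hE, map_add, ← mul_one (X : ℂ[X]), polyVec_X_mul,
      polyVec_one, ← mul_one (C (s / 2 + k * b')), polyVec_C_mul, polyVec_one]
    module
  | add p q hp hq =>
    rw [map_add, ← Elin_apply hO, map_add, Elin_apply, Elin_apply, hp, hq, add_comp, mul_add,
      map_add (ρ.polyVec w₀ s)]
  | monomial n c ih =>
    have h₁ : C c * X ^ (n + 1) = X * (C c * X ^ n) := by ring
    rw [h₁, polyVec_X_mul, ← Elin_apply hO, map_sub, map_smul, Elin_apply, Elin_apply,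
      E_d_neg_one hO, ih, mul_comp X, X_comp, mul_left_comm, sub_mul, map_sub, polyVec_X_mul,
      polyVec_C_mul]
    module

theorem Lact_single_polyVec (hO : ρ.InO) (hw : ρ.IsHW w₀ b') (a : ℂ) (k j : ℤ) (p : ℂ[X]) :
    ρ.Lact (-1) a (b' + 1) k (Finsupp.single j (ρ.polyVec w₀ (a + j) p)) =
      Finsupp.single (k + j)
        (ρ.polyVec w₀ (a + ((k + j : ℤ) : ℂ)) (hwAct b' (a + j) k p)) := by
  rw [Lact_single hO, E_polyVec hO hw, ← polyVec_comp w₀ (a + j) (a + ((k + j : ℤ) : ℂ))]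
  have hd : ρ.d (-1) (ρ.polyVec w₀ (a + j) p) =
      ρ.polyVec w₀ (a + j) (X * p + C ((a + j) / 2) * p) := by
    rw [map_add, polyVec_X_mul, polyVec_C_mul]; module
  rw [hd, ← map_smul, ← map_smul, ← map_sub, ← map_add]
  congr 2
  refine Polynomial.funext fun x => ?_
  simp [hwAct]
  ring_nf

theorem midOp_single_polyVec (a : ℂ) (j : ℤ) (p : ℂ[X]) :
    ρ.midOp a (Finsupp.single j (ρ.polyVec w₀ (a + j) p)) =
      Finsupp.single j (ρ.polyVec w₀ (a + j) (X * p)) := by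
  rw [midOp_single, polyVec_X_mul]

end IsHW

end WittRep

namespace WittRep

variable {W : Type*} [AddCommGroup W] [Module ℂ W] {ρ : WittRep W} {w₀ : W} {b' : ℂ}

/-- The common form of `L₀(a, b')` (`ε = 0`) and `L₁(a, b')` (`ε = 1`). -/
noncomputable def Lpar (ρ : WittRep W) (a b' : ℂ) (w₀ : W) (ε : ℤ) : Submodule ℂ (ℤ →₀ W) :=
  Submodule.span ℂ
    {g | ∃ (i : ℕ) (j : ℤ), g = (ρ.Lact (-1) a (b' + 1) 1)^[i] (Finsupp.single (2 * j + ε) w₀)}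

theorem Lzero_eq_Lpar (a b' : ℂ) (w₀ : W) : ρ.Lzero a b' w₀ = ρ.Lpar a b' w₀ 0 := by
  simp only [Lzero, Lpar, add_zero]

theorem Lone_eq_Lpar (a b' : ℂ) (w₀ : W) : ρ.Lone a b' w₀ = ρ.Lpar a b' w₀ 1 := rfl

/-- The graded description of `Lpar`. -/
noncomputable def parGraded (ρ : WittRep W) (a : ℂ) (w₀ : W) (ε : ℤ) : Submodule ℂ (ℤ →₀ W) :=
  gradedSub fun j => (paritySub (j - ε)).map (ρ.polyVec w₀ (a + j))

theorem mem_parGraded {a : ℂ} {ε : ℤ} {f : ℤ →₀ W} : f ∈ ρ.parGraded a w₀ ε ↔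
    ∀ j, ∃ p ∈ paritySub (j - ε), ρ.polyVec w₀ (a + j) p = f j := Iff.rfl

theorem single_mem_parGraded {a : ℂ} {ε j : ℤ} {p : ℂ[X]} (hp : p ∈ paritySub (j - ε)) :
    Finsupp.single j (ρ.polyVec w₀ (a + j) p) ∈ ρ.parGraded a w₀ ε := by
  refine mem_parGraded.2 fun i => ?_
  rcases eq_or_ne j i with rfl | h
  · exact ⟨p, hp, by simp⟩
  · exact ⟨0, zero_mem _, by simp [Finsupp.single_eq_of_ne' h]⟩

theorem Lact_mem_parGraded (hO : ρ.InO) (hw : ρ.IsHW w₀ b') {a : ℂ} {ε : ℤ} (k : ℤ)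
    {f : ℤ →₀ W} (hf : f ∈ ρ.parGraded a w₀ ε) :
    ρ.Lact (-1) a (b' + 1) k f ∈ ρ.parGraded a w₀ ε := by
  rw [← Llin_apply hO, ← f.sum_single, Finsupp.sum, map_sum]
  refine Submodule.sum_mem _ fun j _ => ?_
  obtain ⟨p, hp, hpj⟩ := mem_parGraded.1 hf j
  rw [← hpj, Llin_apply, Lact_single_polyVec hO hw]
  refine single_mem_parGraded ?_
  have := hwAct_mem_paritySub b' (a + j) k hp
  rwa [← add_sub_assoc] at this

theorem exists_iterate_Lact (hO : ρ.InO) (hw : ρ.IsHW w₀ b') (a : ℂ) (j : ℤ) (n : ℕ) :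
    ∃ q ∈ paritySub n, q.natDegree ≤ n ∧ q.coeff n ≠ 0 ∧
      (ρ.Lact (-1) a (b' + 1) 1)^[n] (Finsupp.single j w₀) =
        Finsupp.single (n + j) (ρ.polyVec w₀ (a + ((n + j : ℤ) : ℂ)) q) := by
  induction n with
  | zero => exact ⟨1, one_mem_paritySub (by simp), by simp, by simp, by simp⟩
  | succ n ih =>
    obtain ⟨q, hq, hdeg, hcoeff, h⟩ := ih
    obtain ⟨hdeg', hcoeff'⟩ := hwAct_one_natDegree b' (a + ((n + j : ℤ) : ℂ)) hdeg
    have hpar := hwAct_mem_paritySub b' (a + ((n + j : ℤ) : ℂ)) 1 hq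
    have e₁ : (1 : ℤ) + n = ((n + 1 : ℕ) : ℤ) := by push_cast; ring
    have e₂ : (1 : ℤ) + (n + j) = ((n + 1 : ℕ) : ℤ) + j := by push_cast; ring
    refine ⟨_, e₁ ▸ hpar, hdeg', ?_, ?_⟩
    · rw [hcoeff']; exact mul_ne_zero (by norm_num) hcoeff
    · rw [Function.iterate_succ_apply', h, Lact_single_polyVec hO hw, e₂]

theorem single_mem_Lpar (hO : ρ.InO) (hw : ρ.IsHW w₀ b') (a : ℂ) (ε j : ℤ) (p : ℂ[X])
    (hp : p ∈ paritySub (j - ε)) :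
    Finsupp.single j (ρ.polyVec w₀ (a + j) p) ∈ ρ.Lpar a b' w₀ ε := by
  induction hn : p.natDegree using Nat.strong_induction_on generalizing p with
  | _ n ih =>
  rcases eq_or_ne p 0 with rfl | h0
  · simp
  obtain ⟨l, hl⟩ := even_sub_natDegree_of_mem_paritySub hp h0
  obtain ⟨q, hq, hdeg, hcoeff, h⟩ := exists_iterate_Lact hO hw a (2 * l + ε) n
  have hj : (n : ℤ) + (2 * l + ε) = j := by omega
  rw [hj] at h
  have hqmem : Finsupp.single j (ρ.polyVec w₀ (a + j) q) ∈ ρ.Lpar a b' w₀ ε :=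
    Submodule.subset_span ⟨n, l, h.symm⟩
  have hqpar : q ∈ paritySub (j - ε) := by
    have : j - ε = n + (l + l) := by omega
    rw [mem_paritySub] at hq ⊢
    rw [hq, this, zpow_add₀ (by norm_num), (Even.add_self l).neg_one_zpow, mul_one]
  set c := p.coeff n / q.coeff n
  have hsum : p = (p - c • q) + c • q := by simp
  rw [hsum, map_add, Finsupp.single_add, map_smul, ← Finsupp.smul_single]
  refine Submodule.add_mem _ ?_ (Submodule.smul_mem _ _ hqmem)
  rcases eq_or_ne (p - c • q) 0 with hr | hr
  · rw [hr]; simp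
  have hle : (p - c • q).natDegree ≤ n :=
    (natDegree_sub_le _ _).trans (max_le hn.le ((natDegree_smul_le _ _).trans hdeg))
  refine ih _ (lt_of_le_of_ne hle fun heq => hr ?_) _
    (Submodule.sub_mem _ hp (Submodule.smul_mem _ _ hqpar)) rfl
  rw [← leadingCoeff_eq_zero, leadingCoeff, heq, coeff_sub, coeff_smul, smul_eq_mul,
    div_mul_cancel₀ _ hcoeff, sub_self]

theorem Lpar_eq_parGraded (hO : ρ.InO) (hw : ρ.IsHW w₀ b') (a : ℂ) (ε : ℤ) :
    ρ.Lpar a b' w₀ ε = ρ.parGraded a w₀ ε := by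
  refine le_antisymm (Submodule.span_le.2 ?_) fun f hf => ?_
  · rintro _ ⟨i, j, rfl⟩
    induction i with
    | zero =>
      have := single_mem_parGraded (ρ := ρ) (w₀ := w₀) (a := a) (ε := ε) (j := 2 * j + ε)
        (one_mem_paritySub (by simp))
      simpa using this
    | succ i ih =>
      rw [Function.iterate_succ_apply']
      exact Lact_mem_parGraded hO hw 1 ih
  · rw [← f.sum_single]
    refine Submodule.sum_mem _ fun j _ => ?_
    obtain ⟨p, hp, hpj⟩ := mem_parGraded.1 hf j
    rw [← hpj]
    exact single_mem_Lpar hO hw a ε j p hp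

end WittRep

theorem map_aeval_of_mem {V V' : Type*} [AddCommGroup V] [Module ℂ V] [AddCommGroup V']
    [Module ℂ V'] {A : Module.End ℂ V} {A' : Module.End ℂ V'} {T : V →ₗ[ℂ] V'}
    {S : Submodule ℂ V} (hA : ∀ x ∈ S, A x ∈ S) (h : ∀ x ∈ S, T (A x) = A' (T x))
    {x : V} (hx : x ∈ S) (r : ℂ[X]) : T (aeval A r x) = aeval A' r (T x) := by
  suffices aeval A r x ∈ S ∧ T (aeval A r x) = aeval A' r (T x) from this.2
  induction r using Polynomial.induction_on with
  | C c => simpa [Module.algebraMap_end_apply] using S.smul_mem c hx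
  | add p q hp hq =>
    simp only [map_add, LinearMap.add_apply]
    exact ⟨S.add_mem hp.1 hq.1, by rw [hp.2, hq.2]⟩
  | monomial n c ih =>
    have e : C c * X ^ (n + 1) = X * (C c * X ^ n) := by ring
    rw [e, map_mul (aeval A), map_mul (aeval A'), aeval_X, aeval_X, Module.End.mul_apply,
      Module.End.mul_apply, ← ih.2]
    exact ⟨hA _ ih.1, h _ ih.1⟩

theorem comp_X_sq_injective : Function.Injective fun r : ℂ[X] => r.comp (X ^ 2) := by
  intro r r' h
  simp only [← expand_eq_comp_X_pow] at h
  exact expand_injective two_pos h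

namespace WittRep

variable {W W' : Type*} [AddCommGroup W] [Module ℂ W] [AddCommGroup W'] [Module ℂ W']
  {ρ : WittRep W} {ρ' : WittRep W'} {w₀ : W} {b' : ℂ}

theorem Lact_zero_apply (hO : ρ.InO) (lam a b : ℂ) (f : ℤ →₀ W) (i : ℤ) :
    ρ.Lact lam a b 0 f i = (a + i) • f i := by
  induction f using Finsupp.induction_linear with
  | zero => rw [← Llin_apply hO, map_zero]; simp
  | add f g hf hg =>
    rw [← Llin_apply hO, map_add, Finsupp.add_apply, Llin_apply, Llin_apply, hf, hg,
      Finsupp.add_apply, smul_add]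
  | single j w =>
    rw [Lact_zero_single hO, Finsupp.smul_apply]
    rcases eq_or_ne j i with rfl | h
    · rfl
    · simp [Finsupp.single_eq_of_ne' h]

theorem weight_eq_of_apply_ne_zero (hO : ρ.InO) {lam a b c : ℂ} {f : ℤ →₀ W}
    (hf : ρ.Lact lam a b 0 f = c • f) {i : ℤ} (hi : f i ≠ 0) : a + i = c := by
  have h := Lact_zero_apply hO lam a b f i
  rw [hf, Finsupp.smul_apply] at h
  exact (smul_left_injective ℂ hi h).symm

theorem eq_single_of_weight (hO : ρ.InO) {lam a b : ℂ} {f : ℤ →₀ W} {j : ℤ}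
    (hf : ρ.Lact lam a b 0 f = (a + j) • f) : f = Finsupp.single j (f j) := by
  ext i
  rcases eq_or_ne j i with rfl | h
  · simp
  · rw [Finsupp.single_eq_of_ne' h]
    by_contra hi
    have := weight_eq_of_apply_ne_zero hO hf hi
    exact h (by exact_mod_cast (add_left_cancel this).symm)

theorem aeval_midOp_sq_single (a : ℂ) (j : ℤ) (r p : ℂ[X]) :
    aeval (ρ.midOp a * ρ.midOp a) r (Finsupp.single j (ρ.polyVec w₀ (a + j) p)) =
      Finsupp.single j (ρ.polyVec w₀ (a + j) (r.comp (X ^ 2) * p)) := by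
  induction r using Polynomial.induction_on with
  | C c =>
    rw [aeval_C, Module.algebraMap_end_apply, C_comp, polyVec_C_mul, Finsupp.smul_single]
  | add p q hp hq =>
    rw [map_add, LinearMap.add_apply, hp, hq, add_comp, add_mul, map_add, Finsupp.single_add]
  | monomial n c ih =>
    have e : C c * X ^ (n + 1) = X * (C c * X ^ n) := by ring
    rw [e, map_mul, aeval_X, Module.End.mul_apply, ih, Module.End.mul_apply,
      midOp_single_polyVec, midOp_single_polyVec, mul_comp X, X_comp]
    congr 2
    ring

theorem midOp_sq_mem_parGraded {a : ℂ} {ε : ℤ} {f : ℤ →₀ W} (hf : f ∈ ρ.parGraded a w₀ ε) :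
    (ρ.midOp a * ρ.midOp a) f ∈ ρ.parGraded a w₀ ε := by
  rw [← f.sum_single, Finsupp.sum, map_sum]
  refine Submodule.sum_mem _ fun j _ => ?_
  obtain ⟨p, hp, hpj⟩ := mem_parGraded.1 hf j
  rw [← hpj, Module.End.mul_apply, midOp_single_polyVec, midOp_single_polyVec]
  refine single_mem_parGraded ?_
  have := X_mul_mem_paritySub (X_mul_mem_paritySub hp)
  rw [mem_paritySub] at this ⊢
  rw [this, zpow_add₀ (by norm_num), zpow_add₀ (by norm_num)]
  simp

theorem single_self_mem_parGraded (a : ℂ) (ε : ℤ) :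
    Finsupp.single ε w₀ ∈ ρ.parGraded a w₀ ε := by
  have := single_mem_parGraded (ρ := ρ) (w₀ := w₀) (a := a) (ε := ε) (j := ε)
    (one_mem_paritySub (by simp))
  simpa using this

/-- A weight vector of the weight of `w₀ ⊗ t^ε` is obtained from `w₀ ⊗ t^ε` by a polynomial in
the square of `midOp`. -/
theorem exists_eq_aeval_midOp_sq (hO : ρ.InO) {lam a b : ℂ} {ε : ℤ} {f : ℤ →₀ W}
    (hf : f ∈ ρ.parGraded a w₀ ε) (hwt : ρ.Lact lam a b 0 f = (a + ε) • f) :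
    ∃ r : ℂ[X], f = aeval (ρ.midOp a * ρ.midOp a) r (Finsupp.single ε w₀) := by
  obtain ⟨p, hp, hpj⟩ := mem_parGraded.1 hf ε
  obtain ⟨r, rfl⟩ := exists_comp_X_sq_of_even (by simp) hp
  refine ⟨r, ?_⟩
  have h := aeval_midOp_sq_single (ρ := ρ) (w₀ := w₀) a ε r 1
  rw [polyVec_one, mul_one] at h
  rw [h, hpj]
  exact eq_single_of_weight hO hwt

/-- `L(W', -1, a', b)` does not embed into `L(W, -1, a, b' + 1)` with image `parGraded`. -/
theorem not_range_eq_parGraded (hO' : ρ'.InO) (hO : ρ.InO) (hw : ρ.IsHW w₀ b') (hb : b' ≠ 0)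
    {a a' b : ℂ} {ε : ℤ} {ψ : (ℤ →₀ W') →ₗ[ℂ] (ℤ →₀ W)} (hinj : Function.Injective ψ)
    (hψ : ∀ k f, ψ (ρ'.Lact (-1) a' b k f) = ρ.Lact (-1) a (b' + 1) k (ψ f)) :
    LinearMap.range ψ ≠ ρ.parGraded a w₀ ε := by
  intro hr
  have hv : Finsupp.single ε w₀ ∈ LinearMap.range ψ := hr ▸ single_self_mem_parGraded a ε
  obtain ⟨u, hu⟩ := hv
  have hsq (x : ℤ →₀ W') : ψ ((ρ'.midOp a' * ρ'.midOp a') x) =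
      (ρ.midOp a * ρ.midOp a) (ψ x) :=
    map_midOp_sq hO' hO ψ x fun m => by rw [hψ, hψ]
  have haeval (x : ℤ →₀ W') (r : ℂ[X]) : ψ (aeval (ρ'.midOp a' * ρ'.midOp a') r x) =
      aeval (ρ.midOp a * ρ.midOp a) r (ψ x) :=
    map_aeval_of_mem (S := ⊤) (fun _ _ => trivial) (fun x _ => hsq x) trivial r
  have hwu : ρ'.Lact (-1) a' b 0 u = (a + ε) • u := hinj <| by
    rw [hψ, map_smul, hu, Lact_zero_single hO]
  have hwg : ρ.Lact (-1) a (b' + 1) 0 (ψ (ρ'.midOp a' u)) = (a + ε) • ψ (ρ'.midOp a' u) := by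
    rw [← hψ, ← midOp_Lact_zero hO', hwu, map_smul, map_smul]
  obtain ⟨r, hrg⟩ := exists_eq_aeval_midOp_sq hO (hr ▸ LinearMap.mem_range_self ψ _) hwg
  rw [← hu, ← haeval] at hrg
  have hYu := hinj hrg
  have hYYu : (ρ'.midOp a' * ρ'.midOp a') u = aeval (ρ'.midOp a' * ρ'.midOp a') (r * r) u := by
    have hcomm : Commute (ρ'.midOp a') (aeval (ρ'.midOp a' * ρ'.midOp a') r) := by
      have h := Commute.all (X : ℂ[X]) (r.comp (X * X))
      have h' := h.map (aeval (ρ'.midOp a'))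
      rwa [aeval_comp, map_mul, aeval_X] at h'
    rw [Module.End.mul_apply]
    conv_lhs => rw [hYu]
    rw [← Module.End.mul_apply, hcomm.eq, Module.End.mul_apply, hYu, map_mul,
      Module.End.mul_apply]
  have h := congrArg ψ hYYu
  have h₁ := aeval_midOp_sq_single (ρ := ρ) (w₀ := w₀) a ε X 1
  have h₂ := aeval_midOp_sq_single (ρ := ρ) (w₀ := w₀) a ε (r * r) 1
  rw [polyVec_one, mul_one] at h₁ h₂
  rw [aeval_X] at h₁
  rw [hsq, haeval, hu, h₁, h₂] at h
  have hX := comp_X_sq_injective (polyVec_injective hw hb _ (Finsupp.single_injective ε h))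
  have hdeg := congrArg natDegree hX
  rw [natDegree_X, ← sq, natDegree_pow] at hdeg
  omega

theorem Lact_neg_one_Lact_one_single (hO : ρ.InO) (hw : ρ.IsHW w₀ b') (a : ℂ) (j : ℤ)
    (p : ℂ[X]) : ρ.Lact (-1) a (b' + 1) (-1) (ρ.Lact (-1) a (b' + 1) 1
      (Finsupp.single j (ρ.polyVec w₀ (a + j) p))) =
    Finsupp.single j (ρ.polyVec w₀ (a + j)
      (hwAct b' ((a + j) + 1) (-1) (hwAct b' (a + j) 1 p))) := by
  rw [Lact_single_polyVec hO hw, Lact_single_polyVec hO hw]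
  have e : (-1 : ℤ) + (1 + j) = j := by ring
  have e' : a + ((1 + j : ℤ) : ℂ) = (a + j) + 1 := by push_cast; ring
  rw [e, e']

/-- An isomorphism between `Lpar` modules of different parity relates the highest weights. -/
theorem eq_three_mul_of_parGraded_iso (hO : ρ.InO) (hO' : ρ'.InO) {w : W} {w' : W'}
    {b b' : ℂ} (hw : ρ.IsHW w b) (hw' : ρ'.IsHW w' b') (hb' : b' ≠ 0) {a a' : ℂ}
    (ha : 0 ≤ a.re ∧ a.re < 1) (ha' : 0 ≤ a'.re ∧ a'.re < 1) {ε ε' : ℤ} (hε : Odd (ε - ε'))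
    (φ : ↥(ρ.parGraded a w ε) ≃ₗ[ℂ] ↥(ρ'.parGraded a' w' ε'))
    (hφ : ∀ (k : ℤ) (u : ↥(ρ.parGraded a w ε))
      (hu : ρ.Lact (-1) a (b + 1) k ↑u ∈ ρ.parGraded a w ε),
      (↑(φ ⟨ρ.Lact (-1) a (b + 1) k ↑u, hu⟩) : ℤ →₀ W') =
        ρ'.Lact (-1) a' (b' + 1) k ↑(φ u)) : b = 3 * b' := by
  obtain ⟨Ψ, hΨ⟩ := LinearMap.exists_extend ((ρ'.parGraded a' w' ε').subtype ∘ₗ φ.toLinearMap)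
  have hΨφ (u : ↥(ρ.parGraded a w ε)) : Ψ u = φ u := LinearMap.congr_fun hΨ u
  have hL (k : ℤ) {x : ℤ →₀ W} (hx : x ∈ ρ.parGraded a w ε) :
      Ψ (ρ.Lact (-1) a (b + 1) k x) = ρ'.Lact (-1) a' (b' + 1) k (Ψ x) := by
    have h := hφ k ⟨x, hx⟩ (Lact_mem_parGraded hO hw k hx)
    rwa [← hΨφ, ← hΨφ] at h
  have hsq {x : ℤ →₀ W} (hx : x ∈ ρ.parGraded a w ε) : Ψ ((ρ.midOp a * ρ.midOp a) x) =
      (ρ'.midOp a' * ρ'.midOp a') (Ψ x) :=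
    map_midOp_sq hO hO' Ψ x fun m => by rw [hL _ (Lact_mem_parGraded hO hw m hx), hL _ hx]
  have hv : Finsupp.single ε w ∈ ρ.parGraded a w ε := single_self_mem_parGraded a ε
  have haeval (r : ℂ[X]) : Ψ (aeval (ρ.midOp a * ρ.midOp a) r (Finsupp.single ε w)) =
      aeval (ρ'.midOp a' * ρ'.midOp a') r (Ψ (Finsupp.single ε w)) :=
    map_aeval_of_mem (fun _ hx => midOp_sq_mem_parGraded hx) (fun _ hx => hsq hx) hv r
  set g := Ψ (Finsupp.single ε w) with hg
  have hwg : ρ'.Lact (-1) a' (b' + 1) 0 g = (a + ε) • g := by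
    rw [hg, ← hL 0 hv, Lact_zero_single hO, map_smul]
  have hgφ : g = φ ⟨_, hv⟩ := hΨφ ⟨_, hv⟩
  have hg0 : g ≠ 0 := by
    intro h
    rw [hgφ, ZeroMemClass.coe_eq_zero, LinearEquiv.map_eq_zero_iff, Submodule.mk_eq_zero,
      Finsupp.single_eq_zero] at h
    exact hw.1 h
  obtain ⟨i, hi⟩ : ∃ i, g i ≠ 0 := by
    by_contra! h
    exact hg0 (Finsupp.ext h)
  have haa : a' = a := by
    have h := weight_eq_of_apply_ne_zero hO' hwg hi
    have hre := congrArg Complex.re h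
    simp only [Complex.add_re, Complex.intCast_re] at hre
    have h₁ : (i : ℝ) < ε + 1 := by linarith [ha.2, ha'.1]
    have h₂ : (ε : ℝ) < i + 1 := by linarith [ha.1, ha'.2]
    have hie : i = ε := by
      have h₁' : i < ε + 1 := by exact_mod_cast h₁
      have h₂' : ε < i + 1 := by exact_mod_cast h₂
      omega
    rw [hie] at h
    exact add_right_cancel h
  subst haa
  obtain ⟨p, hp, hpg⟩ := mem_parGraded.1 (hgφ ▸ (φ ⟨_, hv⟩).2) ε
  obtain ⟨r, rfl⟩ := exists_X_mul_comp_X_sq_of_odd hε hp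
  have hgs : g = Finsupp.single ε (ρ'.polyVec w' (a' + ε) (X * r.comp (X ^ 2))) := by
    rw [hpg]; exact eq_single_of_weight hO' hwg
  have hXmem : (X : ℂ[X]) ∈ paritySub (ε - ε') := by
    have := X_mul_mem_paritySub (one_mem_paritySub (e := ε - ε' - 1) (hε.sub_odd odd_one))
    rwa [mul_one, sub_add_cancel] at this
  obtain ⟨⟨x, hx⟩, hxt⟩ :=
    φ.surjective ⟨_, single_mem_parGraded (ρ := ρ') (w₀ := w') (a := a') hXmem⟩
  have hxΨ : Ψ x = Finsupp.single ε (ρ'.polyVec w' (a' + ε) X) := by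
    rw [hΨφ ⟨x, hx⟩, hxt]
  have hwx : ρ.Lact (-1) a' (b + 1) 0 x = (a' + ε) • x := by
    have h : φ ⟨_, Lact_mem_parGraded hO hw 0 hx⟩ = (a' + ε : ℂ) • φ ⟨x, hx⟩ := by
      refine Subtype.ext ?_
      rw [hφ 0 ⟨x, hx⟩, hxt]
      exact Lact_zero_single hO' _ _ _ _ _
    rw [← map_smul] at h
    exact congrArg Subtype.val (φ.injective h)
  obtain ⟨q, hq⟩ := exists_eq_aeval_midOp_sq hO hx hwx
  rw [hq, haeval, hgs, aeval_midOp_sq_single] at hxΨ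
  have hX := polyVec_injective hw' hb' _ (Finsupp.single_injective ε hxΨ)
  have hqr : q * r = 1 := by
    refine comp_X_sq_injective (mul_left_cancel₀ (X_ne_zero (R := ℂ)) ?_)
    simp only [mul_comp, one_comp, mul_one]
    linear_combination hX
  obtain ⟨c, hc, rfl⟩ := Polynomial.isUnit_iff.1 (isUnit_iff_exists_inv'.2 ⟨q, hqr⟩)
  rw [C_comp, mul_comm, polyVec_C_mul, ← Finsupp.smul_single] at hgs
  have hdd := Lact_neg_one_Lact_one_single hO hw a' ε 1
  have hsum : Finsupp.single ε (ρ.polyVec w (a' + ε)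
      (C 4 * (X * X) + C (a' + ε - 2 * b))) =
      (4 : ℂ) • (ρ.midOp a' * ρ.midOp a') (Finsupp.single ε w) +
        (a' + ε - 2 * b) • Finsupp.single ε w := by
    have h₁ := aeval_midOp_sq_single (ρ := ρ) (w₀ := w) a' ε X 1
    rw [polyVec_one, mul_one, X_comp, aeval_X] at h₁
    rw [h₁, map_add, polyVec_C_mul, ← mul_one (C (a' + ε - 2 * b)), polyVec_C_mul, polyVec_one,
      Finsupp.single_add, Finsupp.smul_single, Finsupp.smul_single, sq]
  rw [hwAct_neg_one_hwAct_one_one, polyVec_one, hsum] at hdd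
  have hΨdd := congrArg Ψ hdd
  rw [hL _ (Lact_mem_parGraded hO hw 1 hv), hL _ hv, map_add, map_smul, map_smul, hsq hv, ← hg,
    hgs, ← Llin_apply hO', ← Llin_apply hO', map_smul, map_smul, Llin_apply, Llin_apply,
    Lact_neg_one_Lact_one_single hO' hw', hwAct_neg_one_hwAct_one_X, map_smul,
    Module.End.mul_apply, midOp_single_polyVec, midOp_single_polyVec] at hΨdd
  simp only [Finsupp.smul_single, ← map_smul, ← Finsupp.single_add, ← map_add] at hΨdd
  have hpoly := polyVec_injective hw' hb' _ (Finsupp.single_injective ε hΨdd)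
  have heval := congrArg (eval 1) hpoly
  simp at heval
  have hcb : c * (b - 3 * b') = 0 := by linear_combination (1 / 2) * heval
  exact sub_eq_zero.1 ((mul_eq_zero.1 hcb).resolve_left hc.ne_zero)

end WittRep

namespace WittRep

variable {W W' : Type*} [AddCommGroup W] [Module ℂ W] [AddCommGroup W'] [Module ℂ W']
  {ρ : WittRep W} {ρ' : WittRep W'} {w₀ : W} {b' : ℂ}

/-- A simple nontrivial `L(W', λ, a', b)` is not isomorphic to a module `Lpar`. -/
theorem not_exists_Lact_iso_parGraded (hO' : ρ'.InO) (hnt' : ¬ ρ'.IsTrivial) (hO : ρ.InO)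
    (hw : ρ.IsHW w₀ b') (hb : b' ≠ 0) {lam a a' b : ℂ} (hlam : lam ≠ 0)
    (hL : ActSimple (ρ'.Lact lam a' b)) {ε : ℤ} {M : Submodule ℂ (ℤ →₀ W)}
    (hM : M = ρ.parGraded a w₀ ε) :
    ¬ ∃ φ : (ℤ →₀ W') ≃ₗ[ℂ] ↥M, ∀ (k : ℤ) (f : ℤ →₀ W'),
      (↑(φ (ρ'.Lact lam a' b k f)) : ℤ →₀ W) = ρ.Lact (-1) a (b' + 1) k ↑(φ f) := by
  rintro ⟨φ, hφ⟩
  have hinj : Function.Injective (M.subtype ∘ₗ φ.toLinearMap) :=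
    M.injective_subtype.comp φ.injective
  have h1 : lam ≠ 1 := by
    rintro rfl
    exact hnt' (isTrivial_of_actSimple_one hO' hL)
  rcases eq_or_ne lam (-1) with rfl | h2
  · refine not_range_eq_parGraded hO' hO hw hb (ε := ε) hinj (fun k f => hφ k f) ?_
    rw [LinearMap.range_comp, LinearEquiv.range, Submodule.map_top, Submodule.range_subtype, hM]
  · have hinv : lam⁻¹ ∉ ({1, -1} : Set ℂ) := by
      rintro (h | h)
      · exact h1 (inv_eq_one.1 h)
      · exact h2 (by rw [← inv_inv lam, Set.mem_singleton_iff.1 h]; norm_num)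
    refine hnt' (isTrivial_of_mem_expFun hO' hlam a' b hinj (s := {1, -1}) (by simp)
      (by simp [h1, h2]) hinv fun v => ?_)
    simpa [hφ] using Lact_neg_Lact_mem_expFun hO a (b' + 1) (φ v : ℤ →₀ W)

/-- A module `N(B, a')` is not isomorphic to a module `Lpar`. -/
theorem not_exists_Nact_iso_parGraded {B : Type*} [AddCommGroup B] [Module ℂ B] {ρB : BRep B}
    (hOB : ρB.InO) (hO : ρ.InO) (hw : ρ.IsHW w₀ b') (hb : b' ≠ 0) {a a' c : ℂ} {ε : ℤ}
    {M : Submodule ℂ (ℤ →₀ W)} (hM : M = ρ.parGraded a w₀ ε) :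
    ¬ ∃ φ : (ℤ →₀ B) ≃ₗ[ℂ] ↥M, ∀ (k : ℤ) (f : ℤ →₀ B),
      (↑(φ (ρB.Nact a' c k f)) : ℤ →₀ W) = ρ.Lact (-1) a (b' + 1) k ↑(φ f) := by
  rintro ⟨φ, hφ⟩
  obtain ⟨u, hu⟩ := φ.surjective ⟨Finsupp.single ε w₀, hM ▸ single_self_mem_parGraded a ε⟩
  have hmem : (fun m : ℤ => LinearMap.id (R := ℂ) (ρ.Lact (-1) a (b' + 1) (-m)
      (ρ.Lact (-1) a (b' + 1) m (Finsupp.single ε w₀)))) ∈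
      ⨆ μ ∈ ({1} : Set ℂ), expFun (ℤ →₀ W) μ := by
    have h := polyFun_le_expFun_one
      (polyFun_comp (M.subtype ∘ₗ φ.toLinearMap) (ρB.Nact_neg_Nact_mem_polyFun hOB a' c u))
    simpa [hφ, hu] using h
  have hsq := d_neg_one_sq_of_midOp_sq hO (midOp_sq_of_mem_expFun hO (by norm_num) a (b' + 1) _
    Function.injective_id (s := {1}) rfl (by norm_num [Set.mem_singleton_iff])
    (by norm_num [Set.mem_singleton_iff]) hmem)
  have h0 : (X * X - C (a + ε) * X : ℂ[X]) = 0 := by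
    refine eq_zero_of_aeval_d_neg_one hw hb ?_
    rw [map_sub, map_mul, map_mul, aeval_X, aeval_C, LinearMap.sub_apply, Module.End.mul_apply,
      Module.End.mul_apply, Module.algebraMap_end_apply, hsq, sub_self]
  have h₂ := congrArg (eval 1) h0
  have h₃ := congrArg (eval (-1)) h0
  simp at h₂ h₃
  have : (2 : ℂ) = 0 := by linear_combination h₂ + h₃
  norm_num at this

/-- Modules `Lpar` of different parity are not isomorphic. -/
theorem not_exists_parGraded_iso (hO : ρ.InO) (hO' : ρ'.InO) {w : W} {w' : W'} {b b' : ℂ}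
    (hw : ρ.IsHW w b) (hw' : ρ'.IsHW w' b') (hb : b ≠ 0) (hb' : b' ≠ 0) {a a' : ℂ}
    (ha : 0 ≤ a.re ∧ a.re < 1) (ha' : 0 ≤ a'.re ∧ a'.re < 1) {ε ε' : ℤ} (hε : Odd (ε - ε'))
    {M : Submodule ℂ (ℤ →₀ W)} {M' : Submodule ℂ (ℤ →₀ W')} (hM : M = ρ.parGraded a w ε)
    (hM' : M' = ρ'.parGraded a' w' ε') :
    ¬ ∃ φ : ↥M ≃ₗ[ℂ] ↥M', ∀ (k : ℤ) (u : ↥M) (hu : ρ.Lact (-1) a (b + 1) k ↑u ∈ M),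
      (↑(φ ⟨ρ.Lact (-1) a (b + 1) k ↑u, hu⟩) : ℤ →₀ W') =
        ρ'.Lact (-1) a' (b' + 1) k ↑(φ u) := by
  subst hM hM'
  rintro ⟨φ, hφ⟩
  have h := eq_three_mul_of_parGraded_iso hO hO' hw hw' hb' ha ha' hε φ hφ
  have hε' : Odd (ε' - ε) := by rw [← neg_sub]; exact hε.neg
  have h' := eq_three_mul_of_parGraded_iso hO' hO hw' hw hb ha' ha hε' φ.symm fun k u hu => by
    have hx := Lact_mem_parGraded hO hw k (φ.symm u).2
    have he : φ ⟨_, hx⟩ = ⟨_, hu⟩ := Subtype.ext (by rw [hφ k (φ.symm u) hx, φ.apply_symm_apply])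
    rw [← he, φ.symm_apply_apply]
  refine hb ?_
  linear_combination (-1 / 8) * h - (3 / 8) * h'

end WittRep

theorem stmt17 {B W W₁ W₂ : Type*} [AddCommGroup B] [Module ℂ B]
    [AddCommGroup W] [Module ℂ W] [AddCommGroup W₁] [Module ℂ W₁]
    [AddCommGroup W₂] [Module ℂ W₂]
    (ρB : BRep B) (hOB : ρB.InO) (hsB : ρB.IsSimple) (hntB : ¬ ρB.IsTrivial)
    (ρ : WittRep W) (hO : ρ.InO) (hs : ρ.IsSimple) (hnt : ¬ ρ.IsTrivial)
    (ρ₁ : WittRep W₁) (hO₁ : ρ₁.InO) (hs₁ : ρ₁.IsSimple) (hnt₁ : ¬ ρ₁.IsTrivial)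
    (ρ₂ : WittRep W₂) (hO₂ : ρ₂.InO) (hs₂ : ρ₂.IsSimple) (hnt₂ : ¬ ρ₂.IsTrivial)
    (lam a a₀ a₁ a₂ b b₁ b₂ : ℂ) (hlam : lam ≠ 0)
    (ha : 0 ≤ a.re ∧ a.re < 1) (ha₀ : 0 ≤ a₀.re ∧ a₀.re < 1)
    (ha₁ : 0 ≤ a₁.re ∧ a₁.re < 1) (ha₂ : 0 ≤ a₂.re ∧ a₂.re < 1)
    (hb₁ : b₁ ≠ 0) (hb₂ : b₂ ≠ 0)
    (w₁ : W₁) (w₂ : W₂) (hw₁ : ρ₁.IsHW w₁ b₁) (hw₂ : ρ₂.IsHW w₂ b₂)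
    (hLs : ActSimple (ρ.Lact lam a b)) :
    (¬ ∃ φ : (ℤ →₀ W) ≃ₗ[ℂ] (ℤ →₀ B),
        ∀ (k : ℤ) (f : ℤ →₀ W), φ (ρ.Lact lam a b k f) = ρB.Nact a₀ 0 k (φ f)) ∧
    (¬ ∃ φ : (ℤ →₀ W) ≃ₗ[ℂ] ↥(ρ₁.Lzero a₁ b₁ w₁),
        ∀ (k : ℤ) (f : ℤ →₀ W),
          (↑(φ (ρ.Lact lam a b k f)) : ℤ →₀ W₁) = ρ₁.Lact (-1) a₁ (b₁ + 1) k ↑(φ f)) ∧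
    (¬ ∃ φ : (ℤ →₀ W) ≃ₗ[ℂ] ↥(ρ₂.Lone a₂ b₂ w₂),
        ∀ (k : ℤ) (f : ℤ →₀ W),
          (↑(φ (ρ.Lact lam a b k f)) : ℤ →₀ W₂) = ρ₂.Lact (-1) a₂ (b₂ + 1) k ↑(φ f)) ∧
    (¬ ∃ φ : (ℤ →₀ B) ≃ₗ[ℂ] ↥(ρ₁.Lzero a₁ b₁ w₁),
        ∀ (k : ℤ) (f : ℤ →₀ B),
          (↑(φ (ρB.Nact a₀ 0 k f)) : ℤ →₀ W₁) = ρ₁.Lact (-1) a₁ (b₁ + 1) k ↑(φ f)) ∧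
    (¬ ∃ φ : (ℤ →₀ B) ≃ₗ[ℂ] ↥(ρ₂.Lone a₂ b₂ w₂),
        ∀ (k : ℤ) (f : ℤ →₀ B),
          (↑(φ (ρB.Nact a₀ 0 k f)) : ℤ →₀ W₂) = ρ₂.Lact (-1) a₂ (b₂ + 1) k ↑(φ f)) ∧
    (¬ ∃ φ : ↥(ρ₁.Lzero a₁ b₁ w₁) ≃ₗ[ℂ] ↥(ρ₂.Lone a₂ b₂ w₂),
        ∀ (k : ℤ) (u : ↥(ρ₁.Lzero a₁ b₁ w₁))
          (hu : ρ₁.Lact (-1) a₁ (b₁ + 1) k ↑u ∈ ρ₁.Lzero a₁ b₁ w₁),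
          (↑(φ ⟨ρ₁.Lact (-1) a₁ (b₁ + 1) k ↑u, hu⟩) : ℤ →₀ W₂) =
            ρ₂.Lact (-1) a₂ (b₂ + 1) k ↑(φ u)) := by
  have hM₁ : ρ₁.Lzero a₁ b₁ w₁ = ρ₁.parGraded a₁ w₁ 0 := by
    rw [WittRep.Lzero_eq_Lpar, WittRep.Lpar_eq_parGraded hO₁ hw₁]
  have hM₂ : ρ₂.Lone a₂ b₂ w₂ = ρ₂.parGraded a₂ w₂ 1 := by
    rw [WittRep.Lone_eq_Lpar, WittRep.Lpar_eq_parGraded hO₂ hw₂]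
  refine ⟨?_, WittRep.not_exists_Lact_iso_parGraded hO hnt hO₁ hw₁ hb₁ hlam hLs hM₁,
    WittRep.not_exists_Lact_iso_parGraded hO hnt hO₂ hw₂ hb₂ hlam hLs hM₂,
    WittRep.not_exists_Nact_iso_parGraded hOB hO₁ hw₁ hb₁ hM₁,
    WittRep.not_exists_Nact_iso_parGraded hOB hO₂ hw₂ hb₂ hM₂,
    WittRep.not_exists_parGraded_iso hO₁ hO₂ hw₁ hw₂ hb₁ hb₂ ha₁ ha₂ (by decide) hM₁ hM₂⟩
  rintro ⟨φ, hφ⟩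
  have h1 : lam ≠ 1 := by
    rintro rfl
    exact hnt (WittRep.isTrivial_of_actSimple_one hO hLs)
  refine hnt (WittRep.isTrivial_of_mem_expFun hO hlam a b (ψ := φ.toLinearMap) φ.injective
    (s := {1}) rfl (by simpa using h1) (by simpa using h1) fun v => ?_)
  simpa [hφ] using polyFun_le_expFun_one (ρB.Nact_neg_Nact_mem_polyFun hOB a₀ 0 (φ v))
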